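/- arXiv:0906.2098 — 3 statements merged into one kernel-verified Lean document; each statement's English description precedes it below -/
import Mathlib

section
/- Let G be a chain graph with chain components 𝒯 and let ≺ be a strict total order of 𝒯 consistent with G. A strictly positive joint probability mass function p of the discrete random vector X = (X_v)_{v∈V} obeys the multivariate regression Markov property for G with respect to ≺ if and only if it obeys the block-recursive Markov property of type IV for G. -/
open scoped Classical BigOperators

/-- A mixed graph on a node set `V`: a set of directed edges and a symmetric
irreflexive set of undirected edges, the two edge sets being disjoint. -/
structure MixedGraph (V : Type*) where
  dir : V → V → Prop
  undir : V → V → Prop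
  undir_symm : ∀ {a b}, undir a b → undir b a
  undir_irrefl : ∀ a, ¬ undir a a
  edge_disjoint : ∀ a b, dir a b → ¬ undir a b

namespace MixedGraph

variable {V : Type*} [Fintype V] [DecidableEq V] (G : MixedGraph V)

/-- One step of a semi-directed path: an undirected edge or a directed edge
followed in the direction of traversal. -/
def step (a b : V) : Prop := G.dir a b ∨ G.undir a b

/-- No semi-directed cycle: there is no directed edge `a → b` together with a
semi-directed path from `b` back to `a`. -/
def NoSemiDirectedCycle : Prop :=
  ∀ a b : V, G.dir a b → ¬ Relation.ReflTransGen G.step b a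

/-- Two nodes are in the same chain component iff they are joined by a path of
undirected edges (the equivalence relation generated by the undirected part). -/
def sameComp (a b : V) : Prop := Relation.ReflTransGen G.undir a b

/-- The chain component of a node. -/
noncomputable def component (v : V) : Finset V :=
  Finset.univ.filter fun w => G.sameComp v w

/-- `T` is a chain component of `G`. -/
def IsComponent (T : Finset V) : Prop := ∃ v, T = G.component v

/-- The collection of chain components of `G`. -/
noncomputable def componentsF : Finset (Finset V) :=
  Finset.univ.image fun v => G.component v

/-- The parents `pa_G(A)`: nodes outside `A` with a directed edge into `A`. -/
noncomputable def paG (A : Finset V) : Finset V :=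
  Finset.univ.filter fun w => w ∉ A ∧ ∃ v ∈ A, G.dir w v

/-- The (inclusive) neighbours `Nb_G(A)`: `A` together with all nodes joined to
`A` by an undirected edge. -/
noncomputable def nbG (A : Finset V) : Finset V :=
  A ∪ Finset.univ.filter fun w => ∃ v ∈ A, G.undir v w

/-- The edge relation of the directed graph `D` of chain components:
`T₁ → T₂` iff they are distinct chain components and `G` has a directed edge
from a node of `T₁` to a node of `T₂`. -/
def dirD (T₁ T₂ : Finset V) : Prop :=
  G.IsComponent T₁ ∧ G.IsComponent T₂ ∧ T₁ ≠ T₂ ∧ ∃ v ∈ T₁, ∃ w ∈ T₂, G.dir v w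

/-- `pa_D(T)`: the union of the parent components of `T` in `D`. -/
noncomputable def paD (T : Finset V) : Finset V :=
  Finset.univ.filter fun w => G.dirD (G.component w) T

/-- `nd_D(T)`: the union of the components `T'` such that there is no directed
path from `T` to `T'` in `D`. -/
noncomputable def ndD (T : Finset V) : Finset V :=
  Finset.univ.filter fun w => ¬ Relation.ReflTransGen G.dirD T (G.component w)

/-- A set of nodes `A` is connected if the subgraph of the undirected part of
`G` induced by `A` is connected (in particular nonempty). -/
def ConnectedIn (A : Finset V) : Prop :=
  A.Nonempty ∧ ∀ a ∈ A, ∀ b ∈ A,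
    Relation.ReflTransGen (fun x y => x ∈ A ∧ y ∈ A ∧ G.undir x y) a b

/-- The connected component of `v` inside the induced subgraph on `A`. -/
noncomputable def compIn (A : Finset V) (v : V) : Finset V :=
  A.filter fun w =>
    Relation.ReflTransGen (fun x y => x ∈ A ∧ y ∈ A ∧ G.undir x y) v w

/-- The set of connected components of the induced subgraph on `A`. -/
noncomputable def connComps (A : Finset V) : Finset (Finset V) :=
  A.image fun v => G.compIn A v

/-- `ord` is a strict total order of the chain components consistent with `G`:
`ord T T'` implies that `T` is not a parent component of `T'`. -/
def ConsistentOrder (ord : Finset V → Finset V → Prop) : Prop :=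
  (∀ T₁ T₂, G.IsComponent T₁ → G.IsComponent T₂ → T₁ ≠ T₂ →
      ord T₁ T₂ ∨ ord T₂ T₁) ∧
  (∀ T, G.IsComponent T → ¬ ord T T) ∧
  (∀ T₁ T₂ T₃, G.IsComponent T₁ → G.IsComponent T₂ → G.IsComponent T₃ →
      ord T₁ T₂ → ord T₂ T₃ → ord T₁ T₃) ∧
  (∀ T₁ T₂, G.IsComponent T₁ → G.IsComponent T₂ → ord T₁ T₂ → ¬ G.dirD T₁ T₂)

/-- `pre(T)`: the union of all the chain components `T'` with `T ≺ T'`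
(the predecessors, i.e. the past, of `T`). -/
noncomputable def pre (ord : Finset V → Finset V → Prop) (T : Finset V) :
    Finset V :=
  Finset.univ.filter fun w => ord T (G.component w)

end MixedGraph

/-- A cell of the joint contingency table: variable `v` takes one of the
levels `0, …, r v - 1` (level `0` playing the role of the first level `1`). -/
abbrev Cell {V : Type*} (r : V → ℕ) := ∀ v : V, Fin (r v)

variable {V : Type*} [Fintype V] [DecidableEq V] {r : V → ℕ}

/-- The marginal probability `p_S(i_S)` (as a function of a full cell `i`,
depending on it only through the coordinates in `S`). -/
noncomputable def marginal (p : Cell r → ℝ) (S : Finset V) (i : Cell r) : ℝ :=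
  ∑ j : Cell r, if ∀ v ∈ S, j v = i v then p j else 0

/-- The conditional probability `p_{A|B}(i_A | i_B)`. -/
noncomputable def condProb (p : Cell r → ℝ) (A B : Finset V) (i : Cell r) : ℝ :=
  marginal p (A ∪ B) i / marginal p B i

/-- `p` is a strictly positive joint probability mass function. -/
def IsPosPMF (p : Cell r → ℝ) : Prop :=
  (∀ i, 0 < p i) ∧ ∑ i : Cell r, p i = 1

/-- Conditional independence `A ⊥ B | C`. -/
def CondIndep (p : Cell r → ℝ) (A B C : Finset V) : Prop :=
  ∀ i : Cell r,
    marginal p (A ∪ B ∪ C) i * marginal p C i =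
      marginal p (A ∪ C) i * marginal p (B ∪ C) i

/-- The cell agreeing with `i` on `S` and equal to the first (reference)
level outside `S`. -/
def splice (hr : ∀ v, 2 ≤ r v) (S : Finset V) (i : Cell r) : Cell r :=
  fun v => if v ∈ S then i v else ⟨0, by have := hr v; omega⟩

/-- The conditional multivariate logistic contrast
`η^{(A)}(i_A | i_B) = Σ_{s ⊆ A} (−1)^{|A∖s|} log p_{A|B}((i_s, 1_{A∖s}) | i_B)`. -/
noncomputable def mlContrast (hr : ∀ v, 2 ≤ r v) (p : Cell r → ℝ)
    (A B : Finset V) (i : Cell r) : ℝ :=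
  ∑ s ∈ A.powerset,
    (-1 : ℝ) ^ (A \ s).card * Real.log (condProb p A B (splice hr (s ∪ B) i))

/-- The multivariate regression (MR) Markov property for the chain graph `G`
with respect to the consistent ordering `ord`: for every chain component `T`
and every nonempty `A ⊆ T`, (MR1) if `A` is connected then
`A ⊥ (pre(T)∖pa_G(A)) | pa_G(A)`, and (MR2) if `A` is disconnected then its
connected components are mutually independent given `pre(T)`. -/
def MRMarkov (G : MixedGraph V) (ord : Finset V → Finset V → Prop)
    (p : Cell r → ℝ) : Prop :=
  ∀ T : Finset V, G.IsComponent T → ∀ A ⊆ T, A.Nonempty →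
    (G.ConnectedIn A →
      CondIndep p A (G.pre ord T \ G.paG A) (G.paG A)) ∧
    (¬ G.ConnectedIn A →
      ∀ i : Cell r,
        condProb p A (G.pre ord T) i =
          ∏ Aj ∈ G.connComps A, condProb p Aj (G.pre ord T) i)

/-- The block-recursive Markov property of type IV for the chain graph `G`:
(IV0) `T ⊥ (nd_D(T)∖pa_D(T)) | pa_D(T)`;
(IV1) `A ⊥ (pa_D(T)∖pa_G(A)) | pa_G(A)` for all `A ⊆ T`;
(IV2) `A ⊥ (T∖Nb_G(A)) | pa_D(T)` for all connected `A ⊆ T`. -/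
def TypeIVMarkov (G : MixedGraph V) (p : Cell r → ℝ) : Prop :=
  (∀ T : Finset V, G.IsComponent T →
      CondIndep p T (G.ndD T \ G.paD T) (G.paD T)) ∧
  (∀ T : Finset V, G.IsComponent T → ∀ A ⊆ T,
      CondIndep p A (G.paD T \ G.paG A) (G.paG A)) ∧
  (∀ T : Finset V, G.IsComponent T → ∀ A ⊆ T, G.ConnectedIn A →
      CondIndep p A (T \ G.nbG A) (G.paD T))

namespace MRProof

set_option linter.unusedSectionVars false

lemma rtg_mono {α : Type*} {R R' : α → α → Prop} (h : ∀ a b, R a b → R' a b) {a b : α}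
    (hab : Relation.ReflTransGen R a b) : Relation.ReflTransGen R' a b := by
  induction hab with
  | refl => exact .refl
  | tail _ h2 ih => exact ih.tail (h _ _ h2)

lemma rtg_symm {α : Type*} {R : α → α → Prop} (h : ∀ a b, R a b → R b a) {a b : α}
    (hab : Relation.ReflTransGen R a b) : Relation.ReflTransGen R b a := by
  induction hab with
  | refl => exact .refl
  | tail _ h2 ih => exact .head (h _ _ h2) ih

section prob
variable {V : Type*} [Fintype V] [DecidableEq V] {r : V → ℕ}

/-- Sum over the coordinates in `W`. -/
noncomputable def sumOver (W : Finset V) (f : Cell r → ℝ) (i : Cell r) : ℝ :=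
  ∑ j : Cell r, if ∀ v, v ∉ W → j v = i v then f j else 0

/-- `f` depends only on coordinates in `S`. -/
def DependsOn (S : Finset V) (f : Cell r → ℝ) : Prop :=
  ∀ i j : Cell r, (∀ v ∈ S, i v = j v) → f i = f j

lemma dependsOn_marginal (p : Cell r → ℝ) (S : Finset V) : DependsOn S (marginal p S) := by
  intro i j h
  unfold marginal
  refine Finset.sum_congr rfl fun k _ => ?_
  have : (∀ v ∈ S, k v = i v) ↔ (∀ v ∈ S, k v = j v) :=
    forall₂_congr fun v hv => by rw [h v hv]
  simp only [this]

lemma DependsOn.mono {S S' : Finset V} {f : Cell r → ℝ} (h : DependsOn S f) (hs : S ⊆ S') :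
    DependsOn S' f := fun i j hij => h i j fun v hv => hij v (hs hv)

lemma sumOver_marginal (p : Cell r → ℝ) {W S : Finset V} (h : W ⊆ S) (i : Cell r) :
    sumOver W (marginal p S) i = marginal p (S \ W) i := by
  unfold sumOver marginal
  have h1 : ∀ j : Cell r, (if ∀ v, v ∉ W → j v = i v then
      (∑ k : Cell r, if ∀ v ∈ S, k v = j v then p k else 0) else 0) =
      ∑ k : Cell r, if (∀ v, v ∉ W → j v = i v) ∧ (∀ v ∈ S, k v = j v) then p k else 0 := by
    intro j
    by_cases hj : ∀ v, v ∉ W → j v = i v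
    · rw [if_pos hj]
      exact Finset.sum_congr rfl fun k _ => by
        congr 1
        exact propext ⟨fun h => ⟨hj, h⟩, fun h => h.2⟩
    · rw [if_neg hj]
      symm
      exact Finset.sum_eq_zero fun k _ => if_neg fun h => hj h.1
  rw [Finset.sum_congr rfl fun j _ => h1 j, Finset.sum_comm]
  refine Finset.sum_congr rfl fun k _ => ?_
  rw [Finset.sum_eq_single (fun v => if v ∈ W then k v else i v)]
  · congr 1
    apply propext
    constructor
    · rintro ⟨-, h2⟩ v hv
      have := h2 v (Finset.mem_sdiff.1 hv).1
      simpa [(Finset.mem_sdiff.1 hv).2] using this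
    · intro h2
      refine ⟨fun v hv => by simp [hv], fun v hv => ?_⟩
      by_cases hw : v ∈ W
      · simp [hw]
      · simp [hw, h2 v (Finset.mem_sdiff.2 ⟨hv, hw⟩)]
  · intro j _ hj
    refine if_neg ?_
    rintro ⟨h2, h3⟩
    apply hj
    funext v
    by_cases hw : v ∈ W
    · simp [hw, h3 v (h hw)]
    · simp [hw, h2 v hw]
  · simp

lemma sumOver_mul {W S : Finset V} {f g : Cell r → ℝ} (hf : DependsOn S f)
    (h : Disjoint S W) (i : Cell r) :
    sumOver W (fun j => f j * g j) i = f i * sumOver W g i := by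
  unfold sumOver
  rw [Finset.mul_sum]
  refine Finset.sum_congr rfl fun j _ => ?_
  by_cases hj : ∀ v, v ∉ W → j v = i v
  · rw [if_pos hj, if_pos hj]
    beta_reduce
    rw [hf j i fun v hv => hj v (Finset.disjoint_left.1 h hv)]
  · rw [if_neg hj, if_neg hj, mul_zero]

lemma marginal_pos {p : Cell r → ℝ} (hp : IsPosPMF p) (S : Finset V) (i : Cell r) :
    0 < marginal p S i := by
  unfold marginal
  refine Finset.sum_pos' (fun j _ => ?_) ⟨i, Finset.mem_univ _, ?_⟩
  · split_ifs
    · exact (hp.1 j).le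
    · exact le_rfl
  · simp [hp.1 i]

/-- `A ⊥ Q \ C | C` -/
def KI (p : Cell r → ℝ) (A C Q : Finset V) : Prop :=
  ∀ i : Cell r, marginal p (A ∪ Q) i * marginal p C i = marginal p (A ∪ C) i * marginal p Q i

variable {p : Cell r → ℝ}

lemma condIndep_iff (A B C : Finset V) : CondIndep p A B C ↔ KI p A C (B ∪ C) := by
  unfold CondIndep KI
  simp only [Finset.union_assoc]

lemma condIndep_sdiff_iff {A C Q : Finset V} (h : C ⊆ Q) :
    CondIndep p A (Q \ C) C ↔ KI p A C Q := by
  rw [condIndep_iff, Finset.sdiff_union_of_subset h]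

lemma KI.mono {A C Q Q' : Finset V} (h : KI p A C Q) (hC : C ⊆ Q') (hQ : Q' ⊆ Q)
    (hd : Disjoint A Q) : KI p A C Q' := by
  intro i
  have e : (fun j => marginal p C j * marginal p (A ∪ Q) j) =
      fun j => marginal p (A ∪ C) j * marginal p Q j := by
    funext j; rw [← h j, mul_comm]
  have d1 : Disjoint (A ∪ C) (Q \ Q') := by
    rw [Finset.disjoint_left] at hd ⊢
    intro v hv hv'
    grind
  have := congrFun (congrArg (sumOver (Q \ Q')) e) i
  rw [sumOver_mul (dependsOn_marginal p C) (d1.mono_left Finset.subset_union_right),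
    sumOver_mul (dependsOn_marginal p (A ∪ C)) d1,
    sumOver_marginal p (Finset.sdiff_subset.trans Finset.subset_union_right),
    sumOver_marginal p Finset.sdiff_subset] at this
  have e1 : (A ∪ Q) \ (Q \ Q') = A ∪ Q' := by
    rw [Finset.disjoint_left] at hd
    ext v; grind
  have e2 : Q \ (Q \ Q') = Q' := by ext v; grind
  rw [e1, e2] at this
  rw [← this, mul_comm]

lemma KI.mono_left {A A' C Q : Finset V} (h : KI p A C Q) (hA : A' ⊆ A) (hC : C ⊆ Q)
    (hd : Disjoint A Q) : KI p A' C Q := by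
  intro i
  have e : (fun j => marginal p C j * marginal p (A ∪ Q) j) =
      fun j => marginal p Q j * marginal p (A ∪ C) j := by
    funext j; rw [mul_comm, h j, mul_comm]
  have d1 : Disjoint Q (A \ A') := (hd.mono_left Finset.sdiff_subset).symm
  have := congrFun (congrArg (sumOver (A \ A')) e) i
  rw [sumOver_mul (dependsOn_marginal p C) (d1.mono_left hC),
    sumOver_mul (dependsOn_marginal p Q) d1,
    sumOver_marginal p (Finset.sdiff_subset.trans Finset.subset_union_left),
    sumOver_marginal p (Finset.sdiff_subset.trans Finset.subset_union_left)] at this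
  rw [Finset.disjoint_left] at hd
  have e1 : (A ∪ Q) \ (A \ A') = A' ∪ Q := by ext v; grind
  have e2 : (A ∪ C) \ (A \ A') = A' ∪ C := by ext v; grind
  rw [e1, e2] at this
  rw [mul_comm, this, mul_comm]

lemma KI_iff_condProb (hp : IsPosPMF p) {A C Q : Finset V} :
    KI p A C Q ↔ ∀ i, condProb p A Q i = condProb p A C i := by
  unfold KI condProb
  refine forall_congr' fun i => ?_
  rw [div_eq_div_iff (marginal_pos hp _ _).ne' (marginal_pos hp _ _).ne']

lemma KI.trans (hp : IsPosPMF p) {A C Q' Q : Finset V} (h1 : KI p A C Q') (h2 : KI p A Q' Q) :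
    KI p A C Q := by
  rw [KI_iff_condProb hp] at *
  exact fun i => (h2 i).trans (h1 i)

lemma KI.weak (hp : IsPosPMF p) {A C C' Q : Finset V} (h : KI p A C Q) (hC : C ⊆ C')
    (hC' : C' ⊆ Q) (hd : Disjoint A Q) : KI p A C' Q := by
  have h1 := h.mono hC hC' hd
  rw [KI_iff_condProb hp] at *
  exact fun i => (h i).trans (h1 i).symm

lemma KI_of_factor {A C Q : Finset V} {f : Cell r → ℝ} (hf : DependsOn (A ∪ C) f)
    (hC : C ⊆ Q) (hd : Disjoint A Q)
    (h : ∀ i, marginal p (A ∪ Q) i = f i * marginal p Q i) : KI p A C Q := by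
  intro i
  have e : marginal p (A ∪ Q) = fun j => f j * marginal p Q j := funext h
  rw [Finset.disjoint_left] at hd
  have d1 : Disjoint (A ∪ C) (Q \ C) := by
    rw [Finset.disjoint_left]
    intro v; grind
  have := congrFun (congrArg (sumOver (Q \ C)) e) i
  rw [sumOver_mul hf d1,
    sumOver_marginal p (Finset.sdiff_subset.trans Finset.subset_union_right),
    sumOver_marginal p Finset.sdiff_subset] at this
  have e1 : (A ∪ Q) \ (Q \ C) = A ∪ C := by ext v; grind
  have e2 : Q \ (Q \ C) = C := by ext v; grind
  rw [e1, e2] at this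
  rw [this, h i]; ring

lemma KI_iff_prod (hp : IsPosPMF p) {A B D : Finset V} :
    KI p A D (B ∪ D) ↔ ∀ i, condProb p (A ∪ B) D i = condProb p A D i * condProb p B D i := by
  unfold KI condProb
  refine forall_congr' fun i => ?_
  have h := marginal_pos hp D i
  rw [Finset.union_assoc, div_mul_div_comm, div_eq_div_iff h.ne' (mul_pos h h).ne']
  constructor
  · intro e
    rw [← e]; ring
  · intro e
    have := mul_right_cancel₀ h.ne' ((by rw [mul_assoc]; exact e) :
      marginal p (A ∪ (B ∪ D)) i * marginal p D i * marginal p D i =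
        marginal p (A ∪ D) i * marginal p (B ∪ D) i * marginal p D i)
    exact this

lemma dependsOn_condProb (A C : Finset V) : DependsOn (A ∪ C) (condProb p A C) := by
  intro i j h
  unfold condProb
  rw [dependsOn_marginal p (A ∪ C) i j h,
    dependsOn_marginal p C i j fun v hv => h v (Finset.mem_union_right _ hv)]

end prob

section graph
variable {V : Type*} [Fintype V] [DecidableEq V] {G : MixedGraph V}

lemma sameComp_symm {a b : V} (h : G.sameComp a b) : G.sameComp b a :=
  rtg_symm (fun _ _ h => G.undir_symm h) h

lemma mem_component {v w : V} : w ∈ G.component v ↔ G.sameComp v w := by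
  simp [MixedGraph.component]

lemma self_mem_component (v : V) : v ∈ G.component v := mem_component.2 .refl

lemma component_eq {v w : V} (h : w ∈ G.component v) : G.component w = G.component v := by
  ext x
  rw [mem_component] at *
  rw [mem_component]
  exact ⟨fun h' => h.trans h', fun h' => (sameComp_symm h).trans h'⟩

lemma isComponent_component (v : V) : G.IsComponent (G.component v) := ⟨v, rfl⟩

lemma component_eq_of_mem {T : Finset V} (hT : G.IsComponent T) {v : V} (h : v ∈ T) :
    G.component v = T := by
  obtain ⟨w, rfl⟩ := hT
  exact component_eq h

lemma mem_iff_component_eq {T : Finset V} (hT : G.IsComponent T) {v : V} :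
    v ∈ T ↔ G.component v = T :=
  ⟨component_eq_of_mem hT, fun h => h ▸ self_mem_component v⟩

lemma connectedIn_component {T : Finset V} (hT : G.IsComponent T) : G.ConnectedIn T := by
  obtain ⟨v, rfl⟩ := hT
  refine ⟨⟨v, self_mem_component v⟩, fun a ha b hb => ?_⟩
  have hab : G.sameComp a b := (sameComp_symm (mem_component.1 ha)).trans (mem_component.1 hb)
  clear hb
  induction hab with
  | refl => exact .refl
  | @tail b c h1 h2 ih =>
    have hb : b ∈ G.component v := mem_component.2 ((mem_component.1 ha).trans h1)
    exact ih.tail ⟨hb, mem_component.2 ((mem_component.1 hb).tail h2), h2⟩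

lemma dir_component_ne (hG : G.NoSemiDirectedCycle) {a b : V} (h : G.dir a b) :
    G.component a ≠ G.component b := by
  intro e
  have : a ∈ G.component b := e ▸ self_mem_component a
  rw [mem_component] at this
  exact hG a b h (rtg_mono (fun _ _ h => Or.inr h) this)

lemma paG_subset_paD (hG : G.NoSemiDirectedCycle) {T A : Finset V} (hT : G.IsComponent T)
    (hA : A ⊆ T) : G.paG A ⊆ G.paD T := by
  intro w hw
  simp only [MixedGraph.paG, MixedGraph.paD, Finset.mem_filter, Finset.mem_univ, true_and] at *
  obtain ⟨-, v, hv, hd⟩ := hw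
  have := dir_component_ne hG hd
  rw [component_eq_of_mem hT (hA hv)] at this
  exact ⟨isComponent_component w, hT, this, w, self_mem_component w, v, hA hv, hd⟩

lemma paG_mono (hG : G.NoSemiDirectedCycle) {T A B : Finset V} (hT : G.IsComponent T)
    (hB : B ⊆ T) (hA : A ⊆ B) : G.paG A ⊆ G.paG B := by
  intro w hw
  simp only [MixedGraph.paG, Finset.mem_filter, Finset.mem_univ, true_and] at *
  obtain ⟨-, v, hv, hd⟩ := hw
  refine ⟨fun hw => dir_component_ne hG hd ?_, v, hA hv, hd⟩
  rw [component_eq_of_mem hT (hB hw), component_eq_of_mem hT (hB (hA hv))]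

variable {ord : Finset V → Finset V → Prop}

lemma mem_pre {T : Finset V} {w : V} : w ∈ G.pre ord T ↔ ord T (G.component w) := by
  simp [MixedGraph.pre]

lemma mem_paD {T : Finset V} {w : V} : w ∈ G.paD T ↔ G.dirD (G.component w) T := by
  simp [MixedGraph.paD]

lemma mem_ndD {T : Finset V} {w : V} :
    w ∈ G.ndD T ↔ ¬ Relation.ReflTransGen G.dirD T (G.component w) := by
  simp [MixedGraph.ndD]

lemma ord_of_dirD (hord : G.ConsistentOrder ord) {S T : Finset V} (h : G.dirD S T) :
    ord T S := by
  rcases hord.1 S T h.1 h.2.1 h.2.2.1 with h1 | h1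
  · exact absurd h (hord.2.2.2 S T h.1 h.2.1 h1)
  · exact h1

lemma paD_subset_pre (hord : G.ConsistentOrder ord) (T : Finset V) :
    G.paD T ⊆ G.pre ord T := by
  intro w hw
  exact mem_pre.2 (ord_of_dirD hord (mem_paD.1 hw))

lemma path_ord (hord : G.ConsistentOrder ord) {T S : Finset V} (hT : G.IsComponent T)
    (h : Relation.ReflTransGen G.dirD T S) : S = T ∨ (G.IsComponent S ∧ ord S T) := by
  induction h with
  | refl => exact Or.inl rfl
  | @tail b c _ h2 ih =>
    right
    have := ord_of_dirD hord h2
    rcases ih with rfl | ⟨hb, hb'⟩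
    · exact ⟨h2.2.1, this⟩
    · exact ⟨h2.2.1, hord.2.2.1 _ _ _ h2.2.1 hb hT this hb'⟩

lemma pre_subset_ndD (hord : G.ConsistentOrder ord) {T : Finset V} (hT : G.IsComponent T) :
    G.pre ord T ⊆ G.ndD T := by
  intro w hw
  rw [mem_pre] at hw
  rw [mem_ndD]
  intro h
  rcases path_ord hord hT h with h | ⟨h1, h2⟩
  · rw [h] at hw
    exact hord.2.1 T hT hw
  · exact hord.2.1 T hT (hord.2.2.1 _ _ _ hT h1 hT hw h2)

lemma disjoint_ndD {T : Finset V} (hT : G.IsComponent T) : Disjoint T (G.ndD T) := by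
  rw [Finset.disjoint_left]
  intro w hw h
  rw [mem_ndD, component_eq_of_mem hT hw] at h
  exact h .refl

lemma disjoint_pre (hord : G.ConsistentOrder ord) {T : Finset V} (hT : G.IsComponent T) :
    Disjoint T (G.pre ord T) :=
  (disjoint_ndD hT).mono_right (pre_subset_ndD hord hT)

/-- no undirected edges between `A` and `B` -/
def NoEdge (G : MixedGraph V) (A B : Finset V) : Prop := ∀ a ∈ A, ∀ b ∈ B, ¬ G.undir a b

lemma NoEdge.symm {A B : Finset V} (h : NoEdge G A B) : NoEdge G B A :=
  fun a ha b hb hab => h b hb a ha (G.undir_symm hab)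

lemma compIn_union {A B : Finset V} (h : NoEdge G A B) {v : V} (hv : v ∈ A) :
    G.compIn (A ∪ B) v = G.compIn A v := by
  ext w
  simp only [MixedGraph.compIn, Finset.mem_filter]
  constructor
  · rintro ⟨-, hw⟩
    induction hw with
    | refl => exact ⟨hv, .refl⟩
    | @tail b c _ h2 ih =>
      have hc : c ∈ A := by
        rcases Finset.mem_union.1 h2.2.1 with hc | hc
        · exact hc
        · exact absurd h2.2.2 (h b ih.1 c hc)
      exact ⟨hc, ih.2.tail ⟨ih.1, hc, h2.2.2⟩⟩
  · rintro ⟨hw, hp⟩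
    exact ⟨Finset.mem_union_left _ hw, rtg_mono (fun a b hab =>
      ⟨Finset.mem_union_left _ hab.1, Finset.mem_union_left _ hab.2.1, hab.2.2⟩) hp⟩

lemma connComps_union {A B : Finset V} (h : NoEdge G A B) :
    G.connComps (A ∪ B) = G.connComps A ∪ G.connComps B := by
  unfold MixedGraph.connComps
  rw [Finset.image_union]
  congr 1
  · exact Finset.image_congr fun v hv => compIn_union h hv
  · refine Finset.image_congr fun v hv => ?_
    rw [Finset.union_comm]
    exact compIn_union h.symm hv

lemma self_mem_compIn {A : Finset V} {v : V} (hv : v ∈ A) : v ∈ G.compIn A v := by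
  simp only [MixedGraph.compIn, Finset.mem_filter]
  exact ⟨hv, .refl⟩

lemma compIn_subset (A : Finset V) (v : V) : G.compIn A v ⊆ A := Finset.filter_subset _ _

lemma connComps_disjoint {A B : Finset V} (h : Disjoint A B) :
    Disjoint (G.connComps A) (G.connComps B) := by
  rw [Finset.disjoint_left] at *
  intro S hA hB
  simp only [MixedGraph.connComps, Finset.mem_image] at hA hB
  obtain ⟨a, ha, rfl⟩ := hA
  obtain ⟨b, hb, e⟩ := hB
  have := self_mem_compIn (G := G) ha
  rw [← e] at this
  exact h ha (compIn_subset _ _ this)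

lemma connComps_of_connected {A : Finset V} (h : G.ConnectedIn A) : G.connComps A = {A} := by
  have : ∀ v ∈ A, G.compIn A v = A := by
    intro v hv
    refine Finset.filter_true_of_mem fun w hw => h.2 v hv w hw
  ext S
  simp only [MixedGraph.connComps, Finset.mem_image, Finset.mem_singleton]
  constructor
  · rintro ⟨v, hv, rfl⟩; exact this v hv
  · rintro rfl
    obtain ⟨v, hv⟩ := h.1
    exact ⟨v, hv, this v hv⟩

lemma reach_symm {A : Finset V} {a b : V}
    (h : Relation.ReflTransGen (fun x y => x ∈ A ∧ y ∈ A ∧ G.undir x y) a b) :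
    Relation.ReflTransGen (fun x y => x ∈ A ∧ y ∈ A ∧ G.undir x y) b a :=
  rtg_symm (fun _ _ h => ⟨h.2.1, h.1, G.undir_symm h.2.2⟩) h

lemma compIn_noEdge (A : Finset V) (v : V) : NoEdge G (G.compIn A v) (A \ G.compIn A v) := by
  intro a ha b hb hab
  simp only [MixedGraph.compIn, Finset.mem_filter, Finset.mem_sdiff] at ha hb
  exact hb.2 ⟨hb.1, ha.2.tail ⟨ha.1, hb.1, hab⟩⟩

lemma compIn_connected {A : Finset V} {v : V} (hv : v ∈ A) : G.ConnectedIn (G.compIn A v) := by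
  have key : ∀ b, Relation.ReflTransGen (fun x y => x ∈ A ∧ y ∈ A ∧ G.undir x y) v b →
      Relation.ReflTransGen
        (fun x y => x ∈ G.compIn A v ∧ y ∈ G.compIn A v ∧ G.undir x y) v b := by
    intro b hb
    induction hb with
    | refl => exact .refl
    | @tail b c h1 h2 ih =>
      refine ih.tail ⟨?_, ?_, h2.2.2⟩
      · exact Finset.mem_filter.2 ⟨h2.1, h1⟩
      · exact Finset.mem_filter.2 ⟨h2.2.1, h1.tail h2⟩
  refine ⟨⟨v, self_mem_compIn hv⟩, fun a ha b hb => ?_⟩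
  exact (reach_symm (key a (Finset.mem_filter.1 ha).2)).trans (key b (Finset.mem_filter.1 hb).2)

end graph

section main
variable {V : Type*} [Fintype V] [DecidableEq V] {r : V → ℕ} {G : MixedGraph V}
  {ord : Finset V → Finset V → Prop} {p : Cell r → ℝ}

/-- product formula for all subsets -/
lemma MR_prod (hp : IsPosPMF p) (h : MRMarkov G ord p) {T : Finset V} (hT : G.IsComponent T)
    {A : Finset V} (hA : A ⊆ T) (i : Cell r) :
    condProb p A (G.pre ord T) i = ∏ Aj ∈ G.connComps A, condProb p Aj (G.pre ord T) i := by
  rcases A.eq_empty_or_nonempty with rfl | hne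
  · simp [MixedGraph.connComps, condProb, (marginal_pos hp _ i).ne']
  by_cases hc : G.ConnectedIn A
  · rw [connComps_of_connected hc, Finset.prod_singleton]
  · exact (h T hT A hA hne).2 hc i

lemma MR_KI (hG : G.NoSemiDirectedCycle) (hord : G.ConsistentOrder ord)
    (hp : IsPosPMF p) (h : MRMarkov G ord p) {T : Finset V} (hT : G.IsComponent T)
    {A : Finset V} (hA : A ⊆ T) : KI p A (G.paG A) (G.pre ord T) := by
  have sub : ∀ B ⊆ T, G.paG B ⊆ G.pre ord T := fun B hB =>
    (paG_subset_paD hG hT hB).trans (paD_subset_pre hord T)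
  have dis := disjoint_pre hord hT
  have hconn : ∀ B ⊆ T, G.ConnectedIn B → KI p B (G.paG B) (G.pre ord T) := by
    intro B hB hc
    rw [← condIndep_sdiff_iff (sub B hB)]
    exact (h T hT B hB hc.1).1 hc
  have hcs : ∀ Aj ∈ G.connComps A, Aj ⊆ A ∧ G.ConnectedIn Aj := by
    intro Aj hAj
    simp only [MixedGraph.connComps, Finset.mem_image] at hAj
    obtain ⟨v, hv, rfl⟩ := hAj
    exact ⟨compIn_subset _ _, compIn_connected hv⟩
  refine KI_of_factor (f := fun i => ∏ Aj ∈ G.connComps A, condProb p Aj (G.paG A) i)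
    ?_ (sub A hA) (dis.mono_left hA) ?_
  · intro i j hij
    refine Finset.prod_congr rfl fun Aj hAj => ?_
    exact dependsOn_condProb Aj _ i j fun v hv =>
      hij v (Finset.union_subset_union_left (hcs Aj hAj).1 hv)
  · intro i
    have h1 := MR_prod hp h hT hA i
    have h2 : ∀ Aj ∈ G.connComps A,
        condProb p Aj (G.pre ord T) i = condProb p Aj (G.paG A) i := by
      intro Aj hAj
      have hs := (hcs Aj hAj).1.trans hA
      exact (KI_iff_condProb hp).1 ((hconn Aj hs (hcs Aj hAj).2).weak hp
        (paG_mono hG hT hA (hcs Aj hAj).1) (sub A hA) (dis.mono_left hs)) i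
    rw [Finset.prod_congr rfl h2] at h1
    rw [← h1]
    unfold condProb
    rw [div_mul_cancel₀ _ (marginal_pos hp _ i).ne']

lemma IV0_aux (hord : G.ConsistentOrder ord)
    (hp : IsPosPMF p)
    (h : ∀ S, G.IsComponent S → KI p S (G.paD S) (G.pre ord S))
    {T : Finset V} (hT : G.IsComponent T) :
    ∀ (n : ℕ) (W : Finset V), W.card = n → G.pre ord T ⊆ W → W ⊆ G.ndD T →
      (∀ w ∈ W, G.component w ⊆ W) → (∀ w ∈ W, G.paD (G.component w) ⊆ W) →
      KI p T (G.paD T) W := by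
  intro n
  induction n using Nat.strong_induction_on with
  | _ n ih =>
  intro W hn hpre hnd hsat hpar
  by_cases hW : W \ G.pre ord T = ∅
  · rw [Finset.sdiff_eq_empty_iff_subset] at hW
    rw [hW.antisymm hpre]
    exact h T hT
  obtain ⟨w, hw, hmax⟩ := Finset.exists_max_image (W \ G.pre ord T)
    (fun w => (G.pre ord (G.component w)).card) (Finset.nonempty_iff_ne_empty.2 hW)
  obtain ⟨hwW, hwp⟩ := Finset.mem_sdiff.1 hw
  set S := G.component w with hS
  have hSc : G.IsComponent S := isComponent_component w
  have hSW : S ⊆ W := hsat w hwW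
  have hTW : Disjoint T W := (disjoint_ndD hT).mono_right hnd
  have hwS : w ∈ S := self_mem_component w
  have hTS : T ≠ S := by
    intro e
    exact Finset.disjoint_left.1 hTW (e ▸ hwS) hwW
  have hST : ord S T := by
    rcases hord.1 T S hT hSc hTS with h1 | h1
    · exact absurd (mem_pre.2 h1) hwp
    · exact h1
  have hpreS : ∀ x ∈ W \ S, ord S (G.component x) := by
    intro x hx
    obtain ⟨hxW, hxS⟩ := Finset.mem_sdiff.1 hx
    have hxc : G.IsComponent (G.component x) := isComponent_component x
    have hne : G.component x ≠ S := fun e => hxS (e ▸ self_mem_component x)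
    by_cases hxp : x ∈ G.pre ord T
    · exact hord.2.2.1 _ _ _ hSc hT hxc hST (mem_pre.1 hxp)
    rcases hord.1 _ _ hxc hSc hne with h1 | h1
    · exfalso
      have hlt : (G.pre ord S).card < (G.pre ord (G.component x)).card := by
        refine Finset.card_lt_card (Finset.ssubset_iff_of_subset ?_ |>.2 ⟨w, mem_pre.2 h1, ?_⟩)
        · intro y hy
          exact mem_pre.2 (hord.2.2.1 _ _ _ hxc hSc (isComponent_component y) h1 (mem_pre.1 hy))
        · rw [mem_pre]
          exact hord.2.1 S hSc
      exact absurd (hmax x (Finset.mem_sdiff.2 ⟨hxW, hxp⟩)) (not_le.2 hlt)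
    · exact h1
  have hmemS : ∀ x, x ∈ S → G.component x = S := fun x hx => component_eq_of_mem hSc hx
  have hpreW : G.pre ord T ⊆ W \ S := by
    intro x hx
    refine Finset.mem_sdiff.2 ⟨hpre hx, fun hxS => hwp ?_⟩
    rw [mem_pre, hmemS x hxS] at hx
    exact mem_pre.2 hx
  have h1 : KI p T (G.paD T) (W \ S) := by
    refine ih (W \ S).card ?_ (W \ S) rfl hpreW (Finset.sdiff_subset.trans hnd) ?_ ?_
    · rw [← hn]
      exact Finset.card_lt_card (Finset.ssubset_iff_of_subset Finset.sdiff_subset |>.2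
        ⟨w, hwW, fun hh => (Finset.mem_sdiff.1 hh).2 hwS⟩)
    · intro x hx y hy
      obtain ⟨hxW, hxS⟩ := Finset.mem_sdiff.1 hx
      refine Finset.mem_sdiff.2 ⟨hsat x hxW hy, fun hyS => hxS ?_⟩
      rw [← hmemS y hyS, component_eq hy]
      exact self_mem_component x
    · intro x hx y hy
      obtain ⟨hxW, hxS⟩ := Finset.mem_sdiff.1 hx
      refine Finset.mem_sdiff.2 ⟨hpar x hxW hy, fun hyS => ?_⟩
      rw [mem_paD, hmemS y hyS] at hy
      exact hord.2.2.2 _ _ hSc (isComponent_component x) (hpreS x hx) hy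
  have hsubS : (W \ S) ∪ T ⊆ G.pre ord S := by
    intro x hx
    rw [mem_pre]
    rcases Finset.mem_union.1 hx with hx | hx
    · exact hpreS x hx
    · rw [component_eq_of_mem hT hx]; exact hST
  have hpaS : G.paD S ⊆ W \ S := by
    intro x hx
    refine Finset.mem_sdiff.2 ⟨hpar w hwW hx, fun hxS => ?_⟩
    rw [mem_paD, hmemS x hxS] at hx
    exact hx.2.2.1 rfl
  have hdS := disjoint_pre hord hSc
  have h2 : KI p S (W \ S) ((W \ S) ∪ T) :=
    ((h S hSc).mono (hpaS.trans Finset.subset_union_left) hsubS hdS).weak hp hpaS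
      Finset.subset_union_left (hdS.mono_right hsubS)
  refine h1.trans hp (fun i => ?_)
  have h3 := h2 i
  have e1 : S ∪ ((W \ S) ∪ T) = T ∪ W := by
    ext x
    have := @hSW x
    simp only [Finset.mem_union, Finset.mem_sdiff]
    tauto
  have e2 : S ∪ (W \ S) = W := by
    ext x
    have := @hSW x
    simp only [Finset.mem_union, Finset.mem_sdiff]
    tauto
  rw [e1, e2, Finset.union_comm (W \ S) T] at h3
  rw [h3, mul_comm]

lemma nbG_noEdge (T A : Finset V) : NoEdge G A (T \ G.nbG A) := by
  intro a ha b hb hab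
  refine (Finset.mem_sdiff.1 hb).2 ?_
  simp only [MixedGraph.nbG, Finset.mem_union, Finset.mem_filter, Finset.mem_univ, true_and]
  exact Or.inr ⟨a, ha, hab⟩

lemma subset_nbG (A : Finset V) : A ⊆ G.nbG A := Finset.subset_union_left

theorem MR_to_IV (hG : G.NoSemiDirectedCycle) (hord : G.ConsistentOrder ord)
    (hp : IsPosPMF p) (h : MRMarkov G ord p) : TypeIVMarkov G p := by
  have hD : ∀ T, G.IsComponent T → ∀ A ⊆ T, KI p A (G.paD T) (G.pre ord T) := by
    intro T hT A hA
    exact (MR_KI hG hord hp h hT hA).weak hp (paG_subset_paD hG hT hA) (paD_subset_pre hord T)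
      ((disjoint_pre hord hT).mono_left hA)
  refine ⟨fun T hT => ?_, fun T hT A hA => ?_, fun T hT A hA hc => ?_⟩
  · rw [condIndep_sdiff_iff ((paD_subset_pre hord T).trans (pre_subset_ndD hord hT))]
    refine IV0_aux hord hp (fun S hS => hD S hS S subset_rfl) hT _ _ rfl
      (pre_subset_ndD hord hT) subset_rfl ?_ ?_
    · intro w hw x hx
      rw [mem_ndD] at *
      rwa [component_eq hx]
    · intro w hw x hx
      rw [mem_ndD] at *
      exact fun hh => hw (hh.tail (mem_paD.1 hx))
  · rw [condIndep_sdiff_iff (paG_subset_paD hG hT hA)]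
    exact (MR_KI hG hord hp h hT hA).mono (paG_subset_paD hG hT hA) (paD_subset_pre hord T)
      ((disjoint_pre hord hT).mono_left hA)
  · rw [condIndep_iff, KI_iff_prod hp]
    intro i
    have hB : T \ G.nbG A ⊆ T := Finset.sdiff_subset
    have hdis : Disjoint A (T \ G.nbG A) := by
      rw [Finset.disjoint_left]
      intro x hx hx'
      exact (Finset.mem_sdiff.1 hx').2 (subset_nbG A hx)
    rw [← (KI_iff_condProb hp).1 (hD T hT _ (Finset.union_subset hA hB)) i,
      ← (KI_iff_condProb hp).1 (hD T hT _ hA) i, ← (KI_iff_condProb hp).1 (hD T hT _ hB) i,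
      MR_prod hp h hT (Finset.union_subset hA hB), MR_prod hp h hT hA, MR_prod hp h hT hB,
      connComps_union (nbG_noEdge T A), Finset.prod_union (connComps_disjoint hdis)]

theorem IV_to_MR (hG : G.NoSemiDirectedCycle) (hord : G.ConsistentOrder ord)
    (hp : IsPosPMF p) (h : TypeIVMarkov G p) : MRMarkov G ord p := by
  obtain ⟨h0, h1, h2⟩ := h
  intro T hT
  have hdis := disjoint_pre hord hT
  have hnd := pre_subset_ndD hord hT
  have hpa := paD_subset_pre hord T
  have hD : ∀ A ⊆ T, KI p A (G.paD T) (G.pre ord T) := by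
    intro A hA
    have := h0 T hT
    rw [condIndep_sdiff_iff (hpa.trans hnd)] at this
    exact (this.mono hpa hnd (disjoint_ndD hT)).mono_left hA hpa hdis
  have hprod : ∀ (n : ℕ) (A : Finset V), A.card = n → A ⊆ T → ∀ i,
      condProb p A (G.pre ord T) i = ∏ Aj ∈ G.connComps A, condProb p Aj (G.pre ord T) i := by
    intro n
    induction n using Nat.strong_induction_on with
    | _ n ih =>
    intro A hn hA i
    rcases A.eq_empty_or_nonempty with rfl | ⟨v, hv⟩
    · simp [MixedGraph.connComps, condProb, (marginal_pos hp _ i).ne']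
    set A1 := G.compIn A v with hA1
    set B := A \ A1 with hBdef
    have hsub : A1 ⊆ A := compIn_subset A v
    have hc : G.ConnectedIn A1 := compIn_connected hv
    have hne : NoEdge G A1 B := compIn_noEdge A v
    have hBA : B ⊆ A := Finset.sdiff_subset
    have hAB : A = A1 ∪ B := (Finset.union_sdiff_of_subset hsub).symm
    have hd1 : Disjoint A1 B := Finset.disjoint_sdiff
    have hBn : B ⊆ T \ G.nbG A1 := by
      intro x hx
      refine Finset.mem_sdiff.2 ⟨hA (hBA hx), fun hx' => ?_⟩
      simp only [MixedGraph.nbG, Finset.mem_union, Finset.mem_filter, Finset.mem_univ,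
        true_and] at hx'
      rcases hx' with hx' | ⟨a, ha, hax⟩
      · exact Finset.disjoint_left.1 hd1 hx' hx
      · exact hne a ha x hx hax
    have hk := h2 T hT A1 (hsub.trans hA) hc
    rw [condIndep_iff] at hk
    have hdd : Disjoint A1 ((T \ G.nbG A1) ∪ G.paD T) := by
      rw [Finset.disjoint_union_right]
      refine ⟨?_, (hdis.mono_left (hsub.trans hA)).mono_right hpa⟩
      rw [Finset.disjoint_left]
      intro x hx hx'
      exact (Finset.mem_sdiff.1 hx').2 (subset_nbG A1 hx)
    have hk2 : KI p A1 (G.paD T) (B ∪ G.paD T) :=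
      hk.mono Finset.subset_union_right (Finset.union_subset_union_left hBn) hdd
    have hk3 := (KI_iff_prod hp).1 hk2 i
    rw [← hAB, ← (KI_iff_condProb hp).1 (hD A hA) i,
      ← (KI_iff_condProb hp).1 (hD A1 (hsub.trans hA)) i,
      ← (KI_iff_condProb hp).1 (hD B (hBA.trans hA)) i] at hk3
    have hlt : B.card < n := by
      rw [← hn]
      exact Finset.card_lt_card (Finset.ssubset_iff_of_subset hBA |>.2
        ⟨v, hv, fun hh => (Finset.mem_sdiff.1 hh).2 (self_mem_compIn hv)⟩)
    rw [hk3, ih _ hlt B rfl (hBA.trans hA) i, hAB, connComps_union hne,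
      Finset.prod_union (connComps_disjoint hd1), connComps_of_connected hc,
      Finset.prod_singleton]
  intro A hA _
  refine ⟨fun _ => ?_, fun _ => hprod _ A rfl hA⟩
  have hs := paG_subset_paD hG hT hA
  have h3 := h1 T hT A hA
  rw [condIndep_sdiff_iff hs] at h3
  rw [condIndep_sdiff_iff (hs.trans hpa)]
  exact h3.trans hp (hD A hA)

end main

end MRProof

/-- Theorem 1: for a chain graph `G` with a consistent strict
total ordering of its chain components, a strictly positive joint pmf obeys the
multivariate regression Markov property iff it obeys the block-recursive
Markov property of type IV. -/
theorem mr_markov_iff_typeIV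
    {V : Type*} [Fintype V] [DecidableEq V] {r : V → ℕ} (hr : ∀ v, 2 ≤ r v)
    (G : MixedGraph V) (hG : G.NoSemiDirectedCycle)
    (ord : Finset V → Finset V → Prop) (hord : G.ConsistentOrder ord)
    (p : Cell r → ℝ) (hp : IsPosPMF p) :
    MRMarkov G ord p ↔ TypeIVMarkov G p := by
  exact ⟨MRProof.MR_to_IV hG hord hp, MRProof.IV_to_MR hG hord hp⟩
end

section
/- Let G be a chain graph with chain components 𝒯 and let ≺ be a strict total order of 𝒯 consistent with G. A strictly positive joint probability mass function p obeys the block-recursive Markov property of type IV for G if and only if for every T ∈ 𝒯: (a) p_{T|pre(T)} = p_{T|pa_D(T)}; (b) p_{A|pa_D(T)} = p_{A|pa_G(A)} for every connected subset A ⊆ T; and (c) p_{A|pa_D(T)} = ∏_{j=1}^r p_{A_j|pa_D(T)} for every disconnected subset A ⊆ T with connected components A_1,…,A_r. -/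
open scoped Classical BigOperators

variable {V : Type*} [Fintype V] [DecidableEq V] {r : V → ℕ}

/-! ### Marginals -/

section Helpers

set_option linter.unusedSectionVars false

theorem aux_marg_pos {V : Type*} [Fintype V] [DecidableEq V] {r : V → ℕ}
    {p : Cell r → ℝ} (hp : IsPosPMF p) (S : Finset V) (i : Cell r) :
    0 < marginal p S i := by
  unfold marginal
  apply Finset.sum_pos'
  · intro j _
    split_ifs
    · exact (hp.1 j).le
    · exact le_rfl
  · refine ⟨i, Finset.mem_univ _, ?_⟩
    rw [if_pos (fun _ _ => rfl)]
    exact hp.1 i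

theorem aux_marg_congr {V : Type*} [Fintype V] [DecidableEq V] {r : V → ℕ}
    (p : Cell r → ℝ) (S : Finset V) (i j : Cell r) (h : ∀ v ∈ S, i v = j v) :
    marginal p S i = marginal p S j := by
  unfold marginal
  refine Finset.sum_congr rfl fun k _ => ?_
  have : (∀ v ∈ S, k v = i v) ↔ (∀ v ∈ S, k v = j v) := by
    constructor
    · intro hk v hv
      rw [hk v hv, h v hv]
    · intro hk v hv
      rw [hk v hv, h v hv]
  simp only [this]

theorem aux_marg_succ {V : Type*} [Fintype V] [DecidableEq V] {r : V → ℕ}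
    (p : Cell r → ℝ) (S : Finset V) (v : V) (hv : v ∉ S) (i : Cell r) :
    marginal p S i = ∑ x : Fin (r v), marginal p (insert v S) (Function.update i v x) := by
  unfold marginal
  rw [Finset.sum_comm]
  refine Finset.sum_congr rfl fun j _ => ?_
  have key : ∀ x : Fin (r v), (∀ w ∈ insert v S, j w = Function.update i v x w) ↔
      (j v = x ∧ ∀ w ∈ S, j w = i w) := by
    intro x
    rw [Finset.forall_mem_insert]
    simp only [Function.update_self]
    refine and_congr_right fun _ => ?_
    refine forall₂_congr fun w hw => ?_
    have hwv : w ≠ v := by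
      rintro rfl
      exact hv hw
    rw [Function.update_of_ne hwv]
  by_cases h : ∀ w ∈ S, j w = i w
  · rw [if_pos h]
    have key2 : ∀ x : Fin (r v), (∀ w ∈ insert v S, j w = Function.update i v x w) ↔ j v = x :=
      fun x => (key x).trans (and_iff_left h)
    simp only [key2, Finset.sum_ite_eq, Finset.mem_univ, if_true]
  · rw [if_neg h]
    symm
    apply Finset.sum_eq_zero
    intro x _
    exact if_neg fun h' => h ((key x).1 h').2

/-- Summing out a common set of extra variables. -/
theorem aux_marg_cancel {V : Type*} [Fintype V] [DecidableEq V] {r : V → ℕ}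
    (p : Cell r → ℝ) (S R : Finset V) (g : Cell r → ℝ) (D : Finset V) :
    Disjoint D S → Disjoint D R →
    (∀ i j : Cell r, (∀ v, v ∉ D → i v = j v) → g i = g j) →
    (∀ i, marginal p (D ∪ S) i = g i * marginal p (D ∪ R) i) →
    ∀ i, marginal p S i = g i * marginal p R i := by
  induction D using Finset.induction_on with
  | empty =>
    intro _ _ _ h i
    simpa using h i
  | insert v D hv ih =>
    intro hS hR hg h
    rw [Finset.disjoint_insert_left] at hS hR
    apply ih hS.2 hR.2
    · intro i j hij
      apply hg
      intro w hw
      exact hij w (fun h => hw (Finset.mem_insert_of_mem h))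
    · intro i
      rw [aux_marg_succ p (D ∪ S) v (by simp [hv, hS.1]),
        aux_marg_succ p (D ∪ R) v (by simp [hv, hR.1]), Finset.mul_sum]
      refine Finset.sum_congr rfl fun x _ => ?_
      rw [← Finset.insert_union, ← Finset.insert_union, h]
      congr 1
      apply hg
      intro w hw
      rw [Function.update_of_ne]
      rintro rfl
      exact hw (Finset.mem_insert_self _ _)

theorem aux_cond_congr {V : Type*} [Fintype V] [DecidableEq V] {r : V → ℕ}
    (p : Cell r → ℝ) (A B : Finset V) (i j : Cell r) (h : ∀ v ∈ A ∪ B, i v = j v) :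
    condProb p A B i = condProb p A B j := by
  unfold condProb
  rw [aux_marg_congr p (A ∪ B) i j h,
    aux_marg_congr p B i j (fun v hv => h v (Finset.mem_union_right _ hv))]

theorem aux_ci_decomp {V : Type*} [Fintype V] [DecidableEq V] {r : V → ℕ}
    {p : Cell r → ℝ} (hp : IsPosPMF p) {A B C B' : Finset V}
    (h : CondIndep p A B C) (hB : B' ⊆ B) (hA : Disjoint B A) (hC : Disjoint B C) :
    CondIndep p A B' C := by
  have key := aux_marg_cancel p (A ∪ B' ∪ C) (B' ∪ C) (condProb p A C) (B \ B')
    (by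
      rw [Finset.disjoint_left] at *
      intro x hx hx'
      simp only [Finset.mem_sdiff, Finset.mem_union] at hx hx'
      have := @hA x hx.1
      have := @hC x hx.1
      tauto)
    (by
      rw [Finset.disjoint_left] at *
      intro x hx hx'
      simp only [Finset.mem_sdiff, Finset.mem_union] at hx hx'
      have := @hC x hx.1
      tauto)
    (by
      intro i j hij
      apply aux_cond_congr
      intro v hv
      apply hij
      intro hv'
      rw [Finset.disjoint_left] at *
      rw [Finset.mem_sdiff] at hv'
      rw [Finset.mem_union] at hv
      rcases hv with hv | hv
      · exact hA hv'.1 hv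
      · exact hC hv'.1 hv)
    (by
      intro i
      have e1 : B \ B' ∪ (A ∪ B' ∪ C) = A ∪ B ∪ C := by
        ext x
        have := @hB x
        simp only [Finset.mem_union, Finset.mem_sdiff]
        tauto
      have e2 : B \ B' ∪ (B' ∪ C) = B ∪ C := by
        ext x
        have := @hB x
        simp only [Finset.mem_union, Finset.mem_sdiff]
        tauto
      rw [e1, e2]
      have := h i
      have hc := (aux_marg_pos hp C i).ne'
      unfold condProb
      field_simp
      linarith)
  intro i
  rw [key i]
  have hc := (aux_marg_pos hp C i).ne'
  unfold condProb
  field_simp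

/-- Conditional independence as equality of conditional densities. -/
theorem aux_ci_iff {V : Type*} [Fintype V] [DecidableEq V] {r : V → ℕ}
    {p : Cell r → ℝ} (hp : IsPosPMF p) {A B C : Finset V} (hCB : C ⊆ B) :
    CondIndep p A (B \ C) C ↔ ∀ i, condProb p A B i = condProb p A C i := by
  unfold CondIndep condProb
  refine forall_congr' fun i => ?_
  have e1 : A ∪ B \ C ∪ C = A ∪ B := by
    rw [Finset.union_assoc, Finset.sdiff_union_of_subset hCB]
  rw [e1, Finset.sdiff_union_of_subset hCB]
  rw [div_eq_div_iff (aux_marg_pos hp B i).ne' (aux_marg_pos hp C i).ne']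

theorem aux_ci_mul {V : Type*} [Fintype V] [DecidableEq V] {r : V → ℕ}
    {p : Cell r → ℝ} (hp : IsPosPMF p) {A B C : Finset V} :
    CondIndep p A B C ↔
      ∀ i, condProb p (A ∪ B) C i = condProb p A C i * condProb p B C i := by
  unfold CondIndep condProb
  refine forall_congr' fun i => ?_
  have hc := (aux_marg_pos hp C i).ne'
  rw [div_mul_div_comm, div_eq_div_iff hc (mul_ne_zero hc hc), ← mul_assoc]
  constructor
  · intro h
    rw [h]
  · intro h
    exact mul_right_cancel₀ hc h

/-! ### Graph facts -/

variable {V : Type*} [Fintype V] [DecidableEq V] (G : MixedGraph V)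

theorem aux_same_symm {a b : V} (h : G.sameComp a b) : G.sameComp b a := by
  unfold MixedGraph.sameComp at *
  induction h with
  | refl => exact .refl
  | tail _ h ih => exact .head (G.undir_symm h) ih

theorem aux_mem_component {v w : V} : w ∈ G.component v ↔ G.sameComp v w := by
  simp [MixedGraph.component]

theorem aux_comp_eq {v w : V} (h : w ∈ G.component v) : G.component w = G.component v := by
  rw [aux_mem_component] at h
  ext x
  rw [aux_mem_component, aux_mem_component]
  exact ⟨fun h' => Relation.ReflTransGen.trans h h',
    fun h' => Relation.ReflTransGen.trans (aux_same_symm G h) h'⟩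

theorem aux_self_mem (v : V) : v ∈ G.component v := by
  rw [aux_mem_component]
  exact .refl

theorem aux_comp_of_mem {T : Finset V} (hT : G.IsComponent T) {w : V} :
    w ∈ T ↔ G.component w = T := by
  obtain ⟨v, rfl⟩ := hT
  exact ⟨aux_comp_eq G, fun h => h ▸ aux_self_mem G w⟩

theorem aux_isComp (v : V) : G.IsComponent (G.component v) := ⟨v, rfl⟩

theorem aux_mem_paD {T : Finset V} {w : V} : w ∈ G.paD T ↔ G.dirD (G.component w) T := by
  simp [MixedGraph.paD]

theorem aux_paD_disj {T : Finset V} (hT : G.IsComponent T) : Disjoint T (G.paD T) := by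
  rw [Finset.disjoint_left]
  intro x hx hx'
  rw [aux_mem_paD] at hx'
  exact hx'.2.2.1 ((aux_comp_of_mem G hT).1 hx)

theorem aux_paG_sub (hG : G.NoSemiDirectedCycle) {T A : Finset V} (hT : G.IsComponent T)
    (hA : A ⊆ T) : G.paG A ⊆ G.paD T := by
  intro w hw
  simp only [MixedGraph.paG, Finset.mem_filter, Finset.mem_univ, true_and] at hw
  obtain ⟨_, v, hv, hd⟩ := hw
  rw [aux_mem_paD]
  refine ⟨aux_isComp G w, hT, ?_, w, aux_self_mem G w, v, hA hv, hd⟩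
  intro h
  have hw : w ∈ T := (aux_comp_of_mem G hT).2 h
  have hvT := (aux_comp_of_mem G hT).1 (hA hv)
  rw [← hvT, aux_mem_component] at hw
  exact hG w v hd (Relation.ReflTransGen.mono (fun _ _ h => Or.inr h) _ _ hw)

variable {ord : Finset V → Finset V → Prop}

theorem aux_dirD_ord (hord : G.ConsistentOrder ord) {S T : Finset V} (h : G.dirD S T) :
    ord T S := by
  rcases hord.1 S T h.1 h.2.1 h.2.2.1 with h' | h'
  · exact absurd h (hord.2.2.2 S T h.1 h.2.1 h')
  · exact h'

theorem aux_path_ord (hord : G.ConsistentOrder ord) {S T : Finset V}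
    (h : Relation.ReflTransGen G.dirD S T) : S = T ∨ (ord T S ∧ G.IsComponent S) := by
  induction h with
  | refl => exact Or.inl rfl
  | tail _ hd ih =>
    right
    have h1 := aux_dirD_ord G hord hd
    rcases ih with rfl | ⟨ih, hS⟩
    · exact ⟨h1, hd.1⟩
    · exact ⟨hord.2.2.1 _ _ _ hd.2.1 hd.1 hS h1 ih, hS⟩

theorem aux_mem_pre {T : Finset V} {w : V} : w ∈ G.pre ord T ↔ ord T (G.component w) := by
  simp [MixedGraph.pre]

theorem aux_mem_nd {T : Finset V} {w : V} :
    w ∈ G.ndD T ↔ ¬ Relation.ReflTransGen G.dirD T (G.component w) := by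
  simp [MixedGraph.ndD]

theorem aux_paD_sub_pre (hord : G.ConsistentOrder ord) (T : Finset V) :
    G.paD T ⊆ G.pre ord T := by
  intro w hw
  rw [aux_mem_paD] at hw
  rw [aux_mem_pre]
  exact aux_dirD_ord G hord hw

theorem aux_pre_sub_nd (hord : G.ConsistentOrder ord) {T : Finset V} (hT : G.IsComponent T) :
    G.pre ord T ⊆ G.ndD T := by
  intro w hw
  rw [aux_mem_pre] at hw
  rw [aux_mem_nd]
  intro h
  rcases aux_path_ord G hord h with h' | ⟨h', _⟩
  · rw [← h'] at hw
    exact hord.2.1 T hT hw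
  · exact hord.2.1 T hT (hord.2.2.1 _ _ _ hT (aux_isComp G w) hT hw h')

theorem aux_pre_disj (hord : G.ConsistentOrder ord) {T : Finset V} (hT : G.IsComponent T) :
    Disjoint (G.pre ord T) T := by
  rw [Finset.disjoint_left]
  intro x hx hx'
  rw [aux_mem_pre, (aux_comp_of_mem G hT).1 hx'] at hx
  exact hord.2.1 T hT hx

theorem aux_nd_disj {T : Finset V} (hT : G.IsComponent T) : Disjoint (G.ndD T) T := by
  rw [Finset.disjoint_left]
  intro x hx hx'
  rw [aux_mem_nd, (aux_comp_of_mem G hT).1 hx'] at hx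
  exact hx .refl

theorem aux_exists_last (hord : G.ConsistentOrder ord) (s : Finset (Finset V))
    (hs : s.Nonempty) (hc : ∀ S ∈ s, G.IsComponent S) :
    ∃ T ∈ s, ∀ S ∈ s, S ≠ T → ord T S := by
  induction hs using Finset.Nonempty.cons_induction with
  | singleton a => exact ⟨a, by simp, by simp⟩
  | cons a s ha hs ih =>
    obtain ⟨T, hT, h⟩ := ih (fun S hS => hc S (Finset.mem_cons_of_mem hS))
    have hTc := hc T (Finset.mem_cons_of_mem hT)
    have hac := hc a (Finset.mem_cons_self a s)
    have hne : a ≠ T := fun h => ha (h ▸ hT)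
    rcases hord.1 a T hac hTc hne with h' | h'
    · refine ⟨a, Finset.mem_cons_self a s, ?_⟩
      intro S hS hSa
      rcases Finset.mem_cons.1 hS with rfl | hS'
      · exact absurd rfl hSa
      · by_cases hST : S = T
        · rw [hST]
          exact h'
        · exact hord.2.2.1 _ _ _ hac hTc (hc S hS) h' (h S hS' hST)
    · refine ⟨T, Finset.mem_cons_of_mem hT, ?_⟩
      intro S hS hST
      rcases Finset.mem_cons.1 hS with rfl | hS'
      · exact h'
      · exact h S hS' hST

/-- Closed under components and parents. -/
def AuxAnc (U : Finset V) : Prop := ∀ w ∈ U, G.component w ⊆ U ∧ G.paD (G.component w) ⊆ U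

variable {r : V → ℕ}

theorem aux_factor (hord : G.ConsistentOrder ord) {p : Cell r → ℝ} (hp : IsPosPMF p)
    (ha : ∀ T, G.IsComponent T → ∀ i : Cell r,
      condProb p T (G.pre ord T) i = condProb p T (G.paD T) i) (U : Finset V) :
    AuxAnc G U → ∀ i, marginal p U i =
      ∏ S ∈ U.image (fun v => G.component v), condProb p S (G.paD S) i := by
  induction U using Finset.strongInduction with
  | H U ih =>
    intro hU i
    rcases U.eq_empty_or_nonempty with rfl | hne
    · simp [marginal, hp.2]
    obtain ⟨T, hTm, hlast⟩ := aux_exists_last G hord (U.image (fun v => G.component v))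
      (hne.image _) (by
        intro S hS
        obtain ⟨v, _, rfl⟩ := Finset.mem_image.1 hS
        exact aux_isComp G v)
    obtain ⟨t, htU, htT⟩ := Finset.mem_image.1 hTm
    have hT : G.IsComponent T := ⟨t, htT.symm⟩
    have htT' : G.component t = T := htT
    have htmem : t ∈ T := (aux_comp_of_mem G hT).2 htT'
    have hTU : T ⊆ U := htT' ▸ (hU t htU).1
    have hpaU : G.paD T ⊆ U := htT' ▸ (hU t htU).2
    have hord' : ∀ w ∈ U \ T, ord T (G.component w) ∧ G.component w ≠ T := by
      intro w hw
      rw [Finset.mem_sdiff] at hw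
      have hne : G.component w ≠ T := fun h => hw.2 ((aux_comp_of_mem G hT).2 h)
      exact ⟨hlast _ (Finset.mem_image_of_mem _ hw.1) hne, hne⟩
    have hU' : AuxAnc G (U \ T) := by
      intro w hw
      obtain ⟨h1, h2⟩ := hord' w hw
      rw [Finset.mem_sdiff] at hw
      constructor
      · intro x hx
        refine Finset.mem_sdiff.2 ⟨(hU w hw.1).1 hx, fun hxT => h2 ?_⟩
        rw [← aux_comp_eq G hx]
        exact (aux_comp_of_mem G hT).1 hxT
      · intro x hx
        refine Finset.mem_sdiff.2 ⟨(hU w hw.1).2 hx, fun hxT => ?_⟩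
        rw [aux_mem_paD, (aux_comp_of_mem G hT).1 hxT] at hx
        exact hord.2.2.2 _ _ hT (aux_isComp G w) h1 hx
    have hpre : U \ T ⊆ G.pre ord T := by
      intro w hw
      rw [aux_mem_pre]
      exact (hord' w hw).1
    have hpaU' : G.paD T ⊆ U \ T := by
      intro w hw
      exact Finset.mem_sdiff.2 ⟨hpaU hw,
        fun h => Finset.disjoint_left.1 (aux_paD_disj G hT) h hw⟩
    have himg : U.image (fun v => G.component v) =
        insert T ((U \ T).image (fun v => G.component v)) := by
      ext S
      simp only [Finset.mem_image, Finset.mem_insert, Finset.mem_sdiff]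
      constructor
      · rintro ⟨v, hv, rfl⟩
        by_cases h : G.component v = T
        · exact Or.inl h
        · exact Or.inr ⟨v, ⟨hv, fun h' => h ((aux_comp_of_mem G hT).1 h')⟩, rfl⟩
      · rintro (rfl | ⟨v, ⟨hv, _⟩, rfl⟩)
        · exact ⟨t, htU, htT'⟩
        · exact ⟨v, hv, rfl⟩
    have hnot : T ∉ (U \ T).image (fun v => G.component v) := by
      intro h
      obtain ⟨v, hv, hvT⟩ := Finset.mem_image.1 h
      exact (hord' v hv).2 hvT
    rw [himg, Finset.prod_insert hnot, ← ih (U \ T)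
      (Finset.sdiff_ssubset hTU ⟨t, htmem⟩) hU' i]
    have hpd := aux_pre_disj G hord hT
    have key := aux_marg_cancel p U (U \ T) (condProb p T (G.paD T)) (G.pre ord T \ (U \ T))
      (by
        rw [Finset.disjoint_left] at *
        intro x hx hx'
        rw [Finset.mem_sdiff] at hx
        exact hx.2 (Finset.mem_sdiff.2 ⟨hx', hpd hx.1⟩))
      Finset.sdiff_disjoint
      (by
        intro i j hij
        apply aux_cond_congr
        intro v hv
        apply hij
        intro hv'
        rw [Finset.mem_sdiff] at hv'
        rcases Finset.mem_union.1 hv with hv | hv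
        · exact Finset.disjoint_left.1 hpd hv'.1 hv
        · exact hv'.2 (hpaU' hv))
      (by
        intro i
        rw [Finset.sdiff_union_of_subset hpre, ← ha T hT i]
        have e : G.pre ord T \ (U \ T) ∪ U = T ∪ G.pre ord T := by
          ext x
          have := @hpre x
          have := @hTU x
          simp only [Finset.mem_union, Finset.mem_sdiff] at *
          tauto
        rw [e]
        have := (aux_marg_pos hp (G.pre ord T) i).ne'
        unfold condProb
        field_simp)
    exact key i

theorem aux_nd_anc (T : Finset V) : AuxAnc G (G.ndD T) := by
  intro w hw
  rw [aux_mem_nd] at hw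
  constructor
  · intro x hx
    rw [aux_mem_nd, aux_comp_eq G hx]
    exact hw
  · intro x hx
    rw [aux_mem_paD] at hx
    rw [aux_mem_nd]
    exact fun h => hw (h.tail hx)

theorem aux_IV0 (hord : G.ConsistentOrder ord) {p : Cell r → ℝ} (hp : IsPosPMF p)
    (ha : ∀ T, G.IsComponent T → ∀ i : Cell r,
      condProb p T (G.pre ord T) i = condProb p T (G.paD T) i)
    (T : Finset V) (hT : G.IsComponent T) : CondIndep p T (G.ndD T \ G.paD T) (G.paD T) := by
  have hsub : G.paD T ⊆ G.ndD T :=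
    (aux_paD_sub_pre G hord T).trans (aux_pre_sub_nd G hord hT)
  rw [aux_ci_iff hp hsub]
  intro i
  have hanc : AuxAnc G (T ∪ G.ndD T) := by
    intro w hw
    rcases Finset.mem_union.1 hw with hw | hw
    · rw [(aux_comp_of_mem G hT).1 hw]
      exact ⟨Finset.subset_union_left, hsub.trans Finset.subset_union_right⟩
    · exact ⟨(aux_nd_anc G T w hw).1.trans Finset.subset_union_right,
        (aux_nd_anc G T w hw).2.trans Finset.subset_union_right⟩
  have himg : (T ∪ G.ndD T).image (fun v => G.component v) =
      insert T ((G.ndD T).image (fun v => G.component v)) := by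
    obtain ⟨t, rfl⟩ := id hT
    ext S
    simp only [Finset.mem_image, Finset.mem_insert, Finset.mem_union]
    constructor
    · rintro ⟨v, hv | hv, rfl⟩
      · exact Or.inl (aux_comp_eq G hv)
      · exact Or.inr ⟨v, hv, rfl⟩
    · rintro (rfl | ⟨v, hv, rfl⟩)
      · exact ⟨t, Or.inl (aux_self_mem G t), rfl⟩
      · exact ⟨v, Or.inr hv, rfl⟩
  have hnot : T ∉ (G.ndD T).image (fun v => G.component v) := by
    intro h
    obtain ⟨v, hv, hvT⟩ := Finset.mem_image.1 h
    exact Finset.disjoint_left.1 (aux_nd_disj G hT) hv ((aux_comp_of_mem G hT).2 hvT)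
  have h1 := aux_factor G hord hp ha _ hanc i
  rw [himg, Finset.prod_insert hnot, ← aux_factor G hord hp ha _ (aux_nd_anc G T) i] at h1
  have := (aux_marg_pos hp (G.ndD T) i).ne'
  rw [condProb, h1]
  field_simp

/-! ### Connected components of induced subgraphs -/

theorem aux_rel_symm {A : Finset V} {a b : V}
    (h : Relation.ReflTransGen (fun x y => x ∈ A ∧ y ∈ A ∧ G.undir x y) a b) :
    Relation.ReflTransGen (fun x y => x ∈ A ∧ y ∈ A ∧ G.undir x y) b a := by
  induction h with
  | refl => exact .refl
  | tail _ h ih => exact .head ⟨h.2.1, h.1, G.undir_symm h.2.2⟩ ih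

theorem aux_mem_compIn {A : Finset V} {v w : V} : w ∈ G.compIn A v ↔
    w ∈ A ∧ Relation.ReflTransGen (fun x y => x ∈ A ∧ y ∈ A ∧ G.undir x y) v w := by
  simp [MixedGraph.compIn]

theorem aux_compIn_eq {A : Finset V} {v w : V} (h : w ∈ G.compIn A v) :
    G.compIn A w = G.compIn A v := by
  rw [aux_mem_compIn] at h
  ext x
  rw [aux_mem_compIn, aux_mem_compIn]
  exact and_congr_right fun _ => ⟨fun h' => h.2.trans h',
    fun h' => (aux_rel_symm G h.2).trans h'⟩

theorem aux_mem_connComps {A S : Finset V} :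
    S ∈ G.connComps A ↔ ∃ v ∈ A, G.compIn A v = S := by
  simp [MixedGraph.connComps]

theorem aux_connComps_sub {A S : Finset V} (h : S ∈ G.connComps A) : S ⊆ A := by
  obtain ⟨v, _, rfl⟩ := (aux_mem_connComps G).1 h
  intro x hx
  exact ((aux_mem_compIn G).1 hx).1

theorem aux_connComps_conn {A S : Finset V} (h : S ∈ G.connComps A) : G.ConnectedIn S := by
  obtain ⟨v, hv, rfl⟩ := (aux_mem_connComps G).1 h
  have hvm : v ∈ G.compIn A v := (aux_mem_compIn G).2 ⟨hv, .refl⟩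
  refine ⟨⟨v, hvm⟩, ?_⟩
  have key : ∀ a, Relation.ReflTransGen (fun x y => x ∈ A ∧ y ∈ A ∧ G.undir x y) v a →
      Relation.ReflTransGen
        (fun x y => x ∈ G.compIn A v ∧ y ∈ G.compIn A v ∧ G.undir x y) v a := by
    intro a h
    induction h with
    | refl => exact .refl
    | tail h1 h2 ih =>
      exact ih.tail ⟨(aux_mem_compIn G).2 ⟨h2.1, h1⟩,
        (aux_mem_compIn G).2 ⟨h2.2.1, h1.tail h2⟩, h2.2.2⟩
  intro a ha b hb
  exact (aux_rel_symm G (key a ((aux_mem_compIn G).1 ha).2)).trans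
    (key b ((aux_mem_compIn G).1 hb).2)

/-- A connected component has no vertex or neighbour in another one. -/
theorem aux_connComps_sep {A S S' : Finset V} (h : S ∈ G.connComps A)
    (h' : S' ∈ G.connComps A) (hne : S ≠ S') : Disjoint S' (G.nbG S) := by
  obtain ⟨v, hv, rfl⟩ := (aux_mem_connComps G).1 h
  obtain ⟨v', hv', rfl⟩ := (aux_mem_connComps G).1 h'
  rw [Finset.disjoint_left]
  intro x hx hx'
  apply hne
  rw [← aux_compIn_eq G hx]
  symm
  apply aux_compIn_eq
  simp only [MixedGraph.nbG, Finset.mem_union, Finset.mem_filter, Finset.mem_univ,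
    true_and] at hx'
  rcases hx' with hx' | ⟨y, hy, hyx⟩
  · exact hx'
  · have hxA := ((aux_mem_compIn G).1 hx).1
    obtain ⟨hyA, hy⟩ := (aux_mem_compIn G).1 hy
    exact (aux_mem_compIn G).2 ⟨hxA, hy.tail ⟨hyA, hxA, hyx⟩⟩

theorem aux_connComps_biUnion (A : Finset V) : (G.connComps A).biUnion id = A := by
  ext x
  simp only [Finset.mem_biUnion, id]
  constructor
  · rintro ⟨S, hS, hx⟩
    exact aux_connComps_sub G hS hx
  · intro hx
    exact ⟨G.compIn A x, (aux_mem_connComps G).2 ⟨x, hx, rfl⟩,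
      (aux_mem_compIn G).2 ⟨hx, .refl⟩⟩

theorem aux_connComps_of_conn {A : Finset V} (h : G.ConnectedIn A) : G.connComps A = {A} := by
  have key : ∀ v ∈ A, G.compIn A v = A := by
    intro v hv
    ext x
    rw [aux_mem_compIn]
    exact ⟨fun h => h.1, fun hx => ⟨hx, h.2 v hv x hx⟩⟩
  ext S
  rw [aux_mem_connComps, Finset.mem_singleton]
  constructor
  · rintro ⟨v, hv, rfl⟩
    exact key v hv
  · rintro rfl
    obtain ⟨v, hv⟩ := h.1
    exact ⟨v, hv, key v hv⟩

/-- Reachability in a union of separated sets stays in the starting part. -/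
theorem aux_sep_reach {A B : Finset V}
    (hno : ∀ a ∈ A, ∀ b ∈ B, ¬ G.undir a b) {v w : V} (hv : v ∈ A)
    (h : Relation.ReflTransGen (fun x y => x ∈ A ∪ B ∧ y ∈ A ∪ B ∧ G.undir x y) v w) :
    w ∈ A ∧ Relation.ReflTransGen (fun x y => x ∈ A ∧ y ∈ A ∧ G.undir x y) v w := by
  induction h with
  | refl => exact ⟨hv, .refl⟩
  | tail _ h ih =>
    rcases Finset.mem_union.1 h.2.1 with h' | h'
    · exact ⟨h', ih.2.tail ⟨ih.1, h', h.2.2⟩⟩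
    · exact absurd h.2.2 (hno _ ih.1 _ h')

theorem aux_sep_compIn {A B : Finset V}
    (hno : ∀ a ∈ A, ∀ b ∈ B, ¬ G.undir a b) {v : V} (hv : v ∈ A) :
    G.compIn (A ∪ B) v = G.compIn A v := by
  ext w
  rw [aux_mem_compIn, aux_mem_compIn]
  constructor
  · intro h
    exact aux_sep_reach G hno hv h.2
  · intro h
    exact ⟨Finset.mem_union_left _ h.1, Relation.ReflTransGen.mono
      (fun x y h => ⟨Finset.mem_union_left _ h.1, Finset.mem_union_left _ h.2.1, h.2.2⟩) _ _ h.2⟩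

theorem aux_sep_connComps {A B : Finset V} (hA : G.ConnectedIn A)
    (hno : ∀ a ∈ A, ∀ b ∈ B, ¬ G.undir a b) :
    G.connComps (A ∪ B) = insert A (G.connComps B) := by
  have hno' : ∀ b ∈ B, ∀ a ∈ A, ¬ G.undir b a :=
    fun b hb a ha h => hno a ha b hb (G.undir_symm h)
  have h1 := aux_connComps_of_conn G hA
  rw [Finset.insert_eq, ← h1]
  ext S
  rw [Finset.mem_union, aux_mem_connComps, aux_mem_connComps, aux_mem_connComps]
  constructor
  · rintro ⟨v, hv, rfl⟩
    rcases Finset.mem_union.1 hv with hv | hv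
    · exact Or.inl ⟨v, hv, (aux_sep_compIn G hno hv).symm⟩
    · refine Or.inr ⟨v, hv, ?_⟩
      rw [Finset.union_comm]
      exact (aux_sep_compIn G hno' hv).symm
  · rintro (⟨v, hv, rfl⟩ | ⟨v, hv, rfl⟩)
    · exact ⟨v, Finset.mem_union_left _ hv, aux_sep_compIn G hno hv⟩
    · refine ⟨v, Finset.mem_union_right _ hv, ?_⟩
      rw [Finset.union_comm]
      exact aux_sep_compIn G hno' hv

theorem aux_cond_empty {p : Cell r → ℝ} (hp : IsPosPMF p) (B : Finset V) (i : Cell r) :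
    condProb p ∅ B i = 1 := by
  unfold condProb
  rw [Finset.empty_union]
  exact div_self (aux_marg_pos hp B i).ne'

/-- (IV2) implies (c). -/
theorem aux_IV2_c {p : Cell r → ℝ} (hp : IsPosPMF p) {T : Finset V} (hT : G.IsComponent T)
    (h : ∀ A ⊆ T, G.ConnectedIn A → CondIndep p A (T \ G.nbG A) (G.paD T))
    (A : Finset V) (hA : A ⊆ T) (i : Cell r) :
    condProb p A (G.paD T) i = ∏ Aj ∈ G.connComps A, condProb p Aj (G.paD T) i := by
  have key : ∀ s : Finset (Finset V), s ⊆ G.connComps A →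
      condProb p (s.biUnion id) (G.paD T) i = ∏ Aj ∈ s, condProb p Aj (G.paD T) i := by
    intro s
    induction s using Finset.induction_on with
    | empty =>
      intro _
      simp [aux_cond_empty hp]
    | insert S s hS ih =>
      intro hs
      have hSm : S ∈ G.connComps A := hs (Finset.mem_insert_self _ _)
      have hs' : s ⊆ G.connComps A := fun x hx => hs (Finset.mem_insert_of_mem hx)
      have hST : S ⊆ T := (aux_connComps_sub G hSm).trans hA
      rw [Finset.prod_insert hS, ← ih hs', Finset.biUnion_insert]
      refine (aux_ci_mul hp).1 ?_ i
      refine aux_ci_decomp hp (h S hST (aux_connComps_conn G hSm)) ?_ ?_ ?_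
      · intro x hx
        obtain ⟨S', hS', hx'⟩ := Finset.mem_biUnion.1 hx
        have hne : S ≠ S' := fun h => hS (h ▸ hS')
        exact Finset.mem_sdiff.2 ⟨hA (aux_connComps_sub G (hs' hS') hx'),
          Finset.disjoint_left.1 (aux_connComps_sep G hSm (hs' hS') hne) hx'⟩
      · rw [Finset.disjoint_left]
        intro x hx hx'
        exact (Finset.mem_sdiff.1 hx).2 (Finset.mem_union_left _ hx')
      · exact (aux_paD_disj G hT).mono_left Finset.sdiff_subset
  have := key _ (Finset.Subset.refl _)
  rwa [aux_connComps_biUnion] at this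

/-- (c) implies (IV2). -/
theorem aux_c_IV2 {p : Cell r → ℝ} (hp : IsPosPMF p) {T : Finset V}
    (h : ∀ A ⊆ T, A.Nonempty → ¬ G.ConnectedIn A → ∀ i : Cell r,
      condProb p A (G.paD T) i = ∏ Aj ∈ G.connComps A, condProb p Aj (G.paD T) i)
    (A : Finset V) (hA : A ⊆ T) (hc : G.ConnectedIn A) :
    CondIndep p A (T \ G.nbG A) (G.paD T) := by
  have h' : ∀ A ⊆ T, ∀ i : Cell r,
      condProb p A (G.paD T) i = ∏ Aj ∈ G.connComps A, condProb p Aj (G.paD T) i := by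
    intro A hA i
    by_cases hc : G.ConnectedIn A
    · rw [aux_connComps_of_conn G hc, Finset.prod_singleton]
    · rcases A.eq_empty_or_nonempty with rfl | hne
      · rw [aux_cond_empty hp]
        simp [MixedGraph.connComps]
      · exact h A hA hne hc i
  rw [aux_ci_mul hp]
  intro i
  have hno : ∀ a ∈ A, ∀ b ∈ T \ G.nbG A, ¬ G.undir a b := by
    intro a ha b hb hab
    apply (Finset.mem_sdiff.1 hb).2
    simp only [MixedGraph.nbG, Finset.mem_union, Finset.mem_filter, Finset.mem_univ, true_and]
    exact Or.inr ⟨a, ha, hab⟩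
  rw [h' _ (Finset.union_subset hA Finset.sdiff_subset) i, aux_sep_connComps G hc hno,
    Finset.prod_insert, ← h' _ Finset.sdiff_subset i]
  intro hm
  obtain ⟨a, ha⟩ := hc.1
  exact (Finset.mem_sdiff.1 (aux_connComps_sub G hm ha)).2 (Finset.mem_union_left _ ha)

/-- (b) and (c) imply (IV1). -/
theorem aux_bc_IV1 (hG : G.NoSemiDirectedCycle) {p : Cell r → ℝ} (hp : IsPosPMF p)
    {T : Finset V} (hT : G.IsComponent T)
    (hb : ∀ A ⊆ T, G.ConnectedIn A → ∀ i : Cell r,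
      condProb p A (G.paD T) i = condProb p A (G.paG A) i)
    (hc : ∀ A ⊆ T, A.Nonempty → ¬ G.ConnectedIn A → ∀ i : Cell r,
      condProb p A (G.paD T) i = ∏ Aj ∈ G.connComps A, condProb p Aj (G.paD T) i)
    (A : Finset V) (hA : A ⊆ T) : CondIndep p A (G.paD T \ G.paG A) (G.paG A) := by
  have hsub := aux_paG_sub G hG hT hA
  rw [aux_ci_iff hp hsub]
  by_cases hcon : G.ConnectedIn A
  · exact hb A hA hcon
  rcases A.eq_empty_or_nonempty with rfl | hne
  · intro i
    rw [aux_cond_empty hp, aux_cond_empty hp]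
  have hloc : ∀ i, condProb p A (G.paD T) i =
      ∏ Aj ∈ G.connComps A, condProb p Aj (G.paG Aj) i := by
    intro i
    rw [hc A hA hne hcon i]
    refine Finset.prod_congr rfl fun S hS => ?_
    exact hb S ((aux_connComps_sub G hS).trans hA) (aux_connComps_conn G hS) i
  have hdisj := aux_paD_disj G hT
  have key := aux_marg_cancel p (A ∪ G.paG A) (G.paG A) (condProb p A (G.paD T))
    (G.paD T \ G.paG A)
    (by
      rw [Finset.disjoint_left]
      intro x hx hx'
      rw [Finset.mem_sdiff] at hx
      rcases Finset.mem_union.1 hx' with h | h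
      · exact Finset.disjoint_left.1 hdisj (hA h) hx.1
      · exact hx.2 h)
    Finset.sdiff_disjoint
    (by
      intro i j hij
      rw [hloc, hloc]
      refine Finset.prod_congr rfl fun S hS => ?_
      have hSA := aux_connComps_sub G hS
      apply aux_cond_congr
      intro v hv
      apply hij
      intro hv'
      rw [Finset.mem_sdiff] at hv'
      rcases Finset.mem_union.1 hv with h | h
      · exact Finset.disjoint_left.1 hdisj (hA (hSA h)) hv'.1
      · apply hv'.2
        simp only [MixedGraph.paG, Finset.mem_filter, Finset.mem_univ, true_and] at h ⊢
        obtain ⟨_, w, hw, hd⟩ := h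
        exact ⟨fun hvA => Finset.disjoint_left.1 hdisj (hA hvA) hv'.1, w, hSA hw, hd⟩)
    (by
      intro i
      have e : G.paD T \ G.paG A ∪ (A ∪ G.paG A) = A ∪ G.paD T := by
        ext x
        have := @hsub x
        simp only [Finset.mem_union, Finset.mem_sdiff]
        tauto
      rw [e, Finset.sdiff_union_of_subset hsub]
      have := (aux_marg_pos hp (G.paD T) i).ne'
      unfold condProb
      field_simp)
  intro i
  have := (aux_marg_pos hp (G.paG A) i).ne'
  have h2 : condProb p A (G.paG A) i = marginal p (A ∪ G.paG A) i / marginal p (G.paG A) i := rfl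
  rw [h2, key i]
  field_simp

end Helpers

/-- Lemma 1: the block-recursive Markov property of type IV
is equivalent to: (a) `p_{T|pre(T)} = p_{T|pa_D(T)}`; (b) `p_{A|pa_D(T)} =
p_{A|pa_G(A)}` for connected `A ⊆ T`; (c) `p_{A|pa_D(T)} = ∏_j p_{A_j|pa_D(T)}`
for disconnected `A ⊆ T` with connected components `A_j`. -/
theorem typeIV_iff_densities
    {V : Type*} [Fintype V] [DecidableEq V] {r : V → ℕ} (hr : ∀ v, 2 ≤ r v)
    (G : MixedGraph V) (hG : G.NoSemiDirectedCycle)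
    (ord : Finset V → Finset V → Prop) (hord : G.ConsistentOrder ord)
    (p : Cell r → ℝ) (hp : IsPosPMF p) :
    TypeIVMarkov G p ↔
      ∀ T : Finset V, G.IsComponent T →
        (∀ i : Cell r,
          condProb p T (G.pre ord T) i = condProb p T (G.paD T) i) ∧
        (∀ A ⊆ T, G.ConnectedIn A →
          ∀ i : Cell r,
            condProb p A (G.paD T) i = condProb p A (G.paG A) i) ∧
        (∀ A ⊆ T, A.Nonempty → ¬ G.ConnectedIn A →
          ∀ i : Cell r,
            condProb p A (G.paD T) i =
              ∏ Aj ∈ G.connComps A, condProb p Aj (G.paD T) i) := by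
  constructor
  · rintro ⟨h0, h1, h2⟩ T hT
    have hsub := aux_paD_sub_pre G hord T
    have hsub' := aux_pre_sub_nd G hord hT
    refine ⟨?_, ?_, ?_⟩
    · rw [← aux_ci_iff hp hsub]
      refine aux_ci_decomp hp (h0 T hT) (Finset.sdiff_subset_sdiff hsub' (Finset.Subset.refl _))
        ?_ Finset.sdiff_disjoint
      exact (aux_nd_disj G hT).mono_left Finset.sdiff_subset
    · intro A hA _
      rw [← aux_ci_iff hp (aux_paG_sub G hG hT hA)]
      exact h1 T hT A hA
    · intro A hA _ _ i
      exact aux_IV2_c G hp hT (h2 T hT) A hA i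
  · intro h
    refine ⟨?_, ?_, ?_⟩
    · exact aux_IV0 G hord hp (fun T hT => (h T hT).1)
    · intro T hT A hA
      exact aux_bc_IV1 G hG hp hT (h T hT).2.1 (h T hT).2.2 A hA
    · intro T hT A hA hc
      exact aux_c_IV2 G hp (h T hT).2.2 A hA hc
end

section
/- Let G be a chain graph with chain components 𝒯 and let ≺ be a strict total order of 𝒯 consistent with G, and let p be a strictly positive joint probability mass function. Then the following two families of conditions are equivalent: (I) for every T ∈ 𝒯, p_{A|pre(T)} = p_{A|pa_G(A)} for every connected subset A ⊆ T, and p_{A|pre(T)} = ∏_{j=1}^r p_{A_j|pre(T)} for every disconnected subset A ⊆ T with connected components A_1,…,A_r; (II) for every T ∈ 𝒯, p_{T|pre(T)} = p_{T|pa_D(T)}, p_{A|pa_D(T)} = p_{A|pa_G(A)} for every connected subset A ⊆ T, and p_{A|pa_D(T)} = ∏_{j=1}^r p_{A_j|pa_D(T)} for every disconnected subset A ⊆ T with connected components A_1,…,A_r. -/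
open scoped Classical BigOperators

variable {V : Type*} [Fintype V] [DecidableEq V] {r : V → ℕ}

theorem aux_marginal_congr (p : Cell r → ℝ) (S : Finset V) (i k : Cell r)
    (h : ∀ v ∈ S, k v = i v) : marginal p S k = marginal p S i := by
  unfold marginal
  refine Finset.sum_congr rfl fun j _ => ?_
  have : (∀ v ∈ S, j v = k v) ↔ (∀ v ∈ S, j v = i v) :=
    forall₂_congr fun v hv => by rw [h v hv]
  simp only [this]

theorem aux_marginal_pos (p : Cell r → ℝ) (hp : IsPosPMF p) (S : Finset V) (i : Cell r) :
    0 < marginal p S i := by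
  unfold marginal
  refine Finset.sum_pos' (fun j _ => ?_) ⟨i, Finset.mem_univ _, ?_⟩
  · split_ifs
    · exact (hp.1 j).le
    · exact le_rfl
  · simpa using hp.1 i

theorem aux_sum_marginal (p : Cell r → ℝ) (S D : Finset V) (hD : D ⊆ S) (i : Cell r) :
    ∑ k : Cell r, (if ∀ v, v ∉ D → k v = i v then marginal p S k else 0)
      = marginal p (S \ D) i := by
  have h1 : ∀ k : Cell r, (if ∀ v, v ∉ D → k v = i v then marginal p S k else 0)
      = ∑ j : Cell r, if (∀ v, v ∉ D → k v = i v) ∧ (∀ v ∈ S, j v = k v) then p j else 0 := by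
    intro k
    unfold marginal
    split_ifs with h
    · refine Finset.sum_congr rfl fun j _ => ?_
      congr 1
      exact propext ⟨fun x => ⟨h, x⟩, And.right⟩
    · exact (Finset.sum_eq_zero fun j _ => if_neg (fun x => h x.1)).symm
  simp only [h1]
  rw [Finset.sum_comm]
  unfold marginal
  refine Finset.sum_congr rfl fun j _ => ?_
  rw [Finset.sum_eq_single (fun v => if v ∈ D then j v else i v)]
  · congr 1
    apply propext
    constructor
    · rintro ⟨_, h⟩ v hv
      rw [Finset.mem_sdiff] at hv
      have := h v hv.1
      simpa [hv.2] using this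
    · intro h
      refine ⟨fun v hv => by simp [hv], fun v hv => ?_⟩
      by_cases hvD : v ∈ D
      · simp [hvD]
      · simp [hvD, h v (Finset.mem_sdiff.2 ⟨hv, hvD⟩)]
  · intro k _ hk
    rw [if_neg]
    rintro ⟨h, h'⟩
    apply hk
    funext v
    by_cases hvD : v ∈ D
    · simp [hvD, h' v (hD hvD)]
    · simp [hvD, h v hvD]
  · intro h
    exact absurd (Finset.mem_univ _) h

/-- Summing a conditional distribution over coordinates in the response set. -/
theorem aux_sum_cond (p : Cell r → ℝ) (A A' B : Finset V) (hA : A' ⊆ A)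
    (hAB : Disjoint A B) (i : Cell r) :
    ∑ k : Cell r, (if ∀ v, v ∉ A \ A' → k v = i v then condProb p A B k else 0)
      = condProb p A' B i := by
  have hS : (A ∪ B) \ (A \ A') = A' ∪ B := by
    ext v
    have h1 := @hA v
    have h2 : v ∈ A → v ∉ B := fun h => Finset.disjoint_left.1 hAB h
    simp only [Finset.mem_sdiff, Finset.mem_union]
    tauto
  have h := aux_sum_marginal p (A ∪ B) (A \ A')
    (Finset.sdiff_subset.trans Finset.subset_union_left) i
  rw [hS] at h
  unfold condProb
  rw [← h, Finset.sum_div]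
  refine Finset.sum_congr rfl fun k _ => ?_
  split_ifs with hk
  · rw [aux_marginal_congr p B i k]
    intro v hv
    apply hk
    intro hvA
    exact Finset.disjoint_left.1 hAB (Finset.mem_sdiff.1 hvA).1 hv
  · simp

theorem aux_restrict (p : Cell r → ℝ) (A A' P B : Finset V) (hA : A' ⊆ A)
    (hAP : Disjoint A P) (hBP : B ⊆ P)
    (h : ∀ i, condProb p A P i = condProb p A B i) (i : Cell r) :
    condProb p A' P i = condProb p A' B i := by
  rw [← aux_sum_cond p A A' P hA hAP i,
    ← aux_sum_cond p A A' B hA (hAP.mono_right hBP) i]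
  simp only [h]

theorem aux_intermediate (p : Cell r → ℝ) (hp : IsPosPMF p) (A P C B : Finset V)
    (hAP : Disjoint A P) (hBC : B ⊆ C) (hCP : C ⊆ P)
    (h : ∀ i, condProb p A P i = condProb p A B i) (i : Cell r) :
    condProb p A C i = condProb p A B i := by
  have hS : (A ∪ P) \ (P \ C) = A ∪ C := by
    ext v
    have h1 := @hCP v
    have h2 : v ∈ A → v ∉ P := fun h => Finset.disjoint_left.1 hAP h
    simp only [Finset.mem_sdiff, Finset.mem_union]
    tauto
  have h1 := aux_sum_marginal p (A ∪ P) (P \ C)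
    (Finset.sdiff_subset.trans Finset.subset_union_right) i
  have h2 := aux_sum_marginal p P (P \ C) Finset.sdiff_subset i
  rw [hS] at h1
  rw [Finset.sdiff_sdiff_eq_self hCP] at h2
  have key : marginal p (A ∪ C) i = condProb p A B i * marginal p C i := by
    rw [← h1, ← h2, Finset.mul_sum]
    refine Finset.sum_congr rfl fun k _ => ?_
    split_ifs with hk
    · have e : condProb p A B k = condProb p A B i := by
        unfold condProb
        rw [aux_marginal_congr p B i k, aux_marginal_congr p (A ∪ B) i k]
        · intro v hv
          apply hk
          intro hvP
          rw [Finset.mem_sdiff] at hvP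
          rcases Finset.mem_union.1 hv with hv | hv
          · exact Finset.disjoint_left.1 hAP hv hvP.1
          · exact hvP.2 (hBC hv)
        · intro v hv
          apply hk
          intro hvP
          exact (Finset.mem_sdiff.1 hvP).2 (hBC hv)
      rw [← e, ← h k]
      unfold condProb
      rw [div_mul_cancel₀ _ (aux_marginal_pos p hp P k).ne']
    · simp
  rw [condProb, key, mul_div_cancel_right₀ _ (aux_marginal_pos p hp C i).ne']

namespace MixedGraph

theorem aux_sameComp_symm (G : MixedGraph V) {a b : V} (h : G.sameComp a b) :
    G.sameComp b a := by
  unfold sameComp at *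
  induction h with
  | refl => exact .refl
  | tail _ hbc ih => exact .head (G.undir_symm hbc) ih

theorem aux_mem_component (G : MixedGraph V) {a b : V} :
    b ∈ G.component a ↔ G.sameComp a b := by
  simp [component]

theorem aux_component_eq (G : MixedGraph V) {T : Finset V} (hT : G.IsComponent T) {w : V}
    (hw : w ∈ T) : G.component w = T := by
  obtain ⟨v, rfl⟩ := hT
  rw [aux_mem_component] at hw
  ext x
  rw [aux_mem_component, aux_mem_component]
  exact ⟨fun h => Relation.ReflTransGen.trans hw h,
    fun h => Relation.ReflTransGen.trans (G.aux_sameComp_symm hw) h⟩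

theorem aux_connected (G : MixedGraph V) {T : Finset V} (hT : G.IsComponent T) :
    G.ConnectedIn T := by
  refine ⟨?_, ?_⟩
  · obtain ⟨v, rfl⟩ := hT
    exact ⟨v, G.aux_mem_component.2 .refl⟩
  · intro a ha b hb
    rw [← G.aux_component_eq hT ha] at hb ⊢
    rw [aux_mem_component] at hb
    unfold sameComp at hb
    induction hb with
    | refl => exact .refl
    | tail h1 h2 ih =>
      exact .tail ih ⟨G.aux_mem_component.2 h1, G.aux_mem_component.2 (h1.tail h2), h2⟩

theorem aux_paG_subset (G : MixedGraph V) (hG : G.NoSemiDirectedCycle) {T A : Finset V}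
    (hT : G.IsComponent T) (hA : A ⊆ T) : G.paG A ⊆ G.paD T := by
  intro w hw
  simp only [paG, Finset.mem_filter, Finset.mem_univ, true_and] at hw
  obtain ⟨_, v, hv, hwv⟩ := hw
  simp only [paD, Finset.mem_filter, Finset.mem_univ, true_and]
  refine ⟨⟨w, rfl⟩, hT, ?_, w, G.aux_mem_component.2 .refl, v, hA hv, hwv⟩
  intro h
  apply hG w v hwv
  have : v ∈ G.component w := h ▸ hA hv
  exact Relation.ReflTransGen.mono (fun _ _ h => Or.inr h) _ _
    (G.aux_sameComp_symm (G.aux_mem_component.1 this))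

theorem aux_paD_subset (G : MixedGraph V) {ord : Finset V → Finset V → Prop}
    (hord : G.ConsistentOrder ord) {T : Finset V}
    (hT : G.IsComponent T) : G.paD T ⊆ G.pre ord T := by
  intro w hw
  simp only [paD, pre, Finset.mem_filter, Finset.mem_univ, true_and] at hw ⊢
  rcases hord.1 T _ hT ⟨w, rfl⟩ hw.2.2.1.symm with h | h
  · exact h
  · exact absurd hw (hord.2.2.2 _ _ ⟨w, rfl⟩ hT h)

theorem aux_disjoint_pre (G : MixedGraph V) {ord : Finset V → Finset V → Prop}
    (hord : G.ConsistentOrder ord) {T : Finset V}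
    (hT : G.IsComponent T) : Disjoint T (G.pre ord T) := by
  rw [Finset.disjoint_left]
  intro w hw hw'
  simp only [pre, Finset.mem_filter, Finset.mem_univ, true_and] at hw'
  rw [G.aux_component_eq hT hw] at hw'
  exact hord.2.1 T hT hw'

theorem aux_connComps_subset (G : MixedGraph V) {A B : Finset V}
    (h : B ∈ G.connComps A) : B ⊆ A := by
  simp only [connComps, Finset.mem_image] at h
  obtain ⟨v, _, rfl⟩ := h
  exact Finset.filter_subset _ _

end MixedGraph

/-- equivalence of the two families of density conditions
(I) (the multivariate regression conditions (1a)-(1b)) and (II) (the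
conditions of Lemma 1 characterizing the type IV property). -/
theorem mr_densities_iff_typeIV_densities
    {V : Type*} [Fintype V] [DecidableEq V] {r : V → ℕ} (hr : ∀ v, 2 ≤ r v)
    (G : MixedGraph V) (hG : G.NoSemiDirectedCycle)
    (ord : Finset V → Finset V → Prop) (hord : G.ConsistentOrder ord)
    (p : Cell r → ℝ) (hp : IsPosPMF p) :
    (∀ T : Finset V, G.IsComponent T →
      (∀ A ⊆ T, G.ConnectedIn A →
        ∀ i : Cell r,
          condProb p A (G.pre ord T) i = condProb p A (G.paG A) i) ∧
      (∀ A ⊆ T, A.Nonempty → ¬ G.ConnectedIn A →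
        ∀ i : Cell r,
          condProb p A (G.pre ord T) i =
            ∏ Aj ∈ G.connComps A, condProb p Aj (G.pre ord T) i))
    ↔
    (∀ T : Finset V, G.IsComponent T →
      (∀ i : Cell r,
        condProb p T (G.pre ord T) i = condProb p T (G.paD T) i) ∧
      (∀ A ⊆ T, G.ConnectedIn A →
        ∀ i : Cell r,
          condProb p A (G.paD T) i = condProb p A (G.paG A) i) ∧
      (∀ A ⊆ T, A.Nonempty → ¬ G.ConnectedIn A →
        ∀ i : Cell r,
          condProb p A (G.paD T) i =
            ∏ Aj ∈ G.connComps A, condProb p Aj (G.paD T) i)) := by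
  refine forall₂_congr fun T hT => ?_
  have hdis := G.aux_disjoint_pre hord hT
  have hDP := G.aux_paD_subset hord hT
  constructor
  · rintro ⟨h1, h2⟩
    have hc : ∀ A ⊆ T, G.ConnectedIn A → ∀ i,
        condProb p A (G.paD T) i = condProb p A (G.paG A) i := fun A hA hcA i =>
      aux_intermediate p hp A _ _ _ (hdis.mono_left hA) (G.aux_paG_subset hG hT hA) hDP
        (h1 A hA hcA) i
    have h0 : ∀ i, condProb p T (G.pre ord T) i = condProb p T (G.paD T) i := fun i => by
      rw [h1 T subset_rfl (G.aux_connected hT) i, hc T subset_rfl (G.aux_connected hT) i]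
    have hR : ∀ A ⊆ T, ∀ i, condProb p A (G.pre ord T) i = condProb p A (G.paD T) i :=
      fun A hA => aux_restrict p T A _ _ hA hdis hDP h0
    refine ⟨h0, hc, fun A hA hne hnc i => ?_⟩
    rw [← hR A hA, h2 A hA hne hnc i]
    exact Finset.prod_congr rfl fun B hB => hR B ((G.aux_connComps_subset hB).trans hA) i
  · rintro ⟨h0, hc, h2⟩
    have hR : ∀ A ⊆ T, ∀ i, condProb p A (G.pre ord T) i = condProb p A (G.paD T) i :=
      fun A hA => aux_restrict p T A _ _ hA hdis hDP h0
    refine ⟨fun A hA hcA i => by rw [hR A hA, hc A hA hcA], fun A hA hne hnc i => ?_⟩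
    rw [hR A hA, h2 A hA hne hnc i]
    exact Finset.prod_congr rfl fun B hB => (hR B ((G.aux_connComps_subset hB).trans hA) i).symm
end
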